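/- There exists a universal constant C > 0 such that whenever k < (2^ℓ/12)^{2/7}, the distribution Q_k^O(s_0,...,s_k) = Pr(s_0) · ∫_{O(D)} ∏_{i=1}^k ⟨y^i_{s_0...s_i}| O σ^{i−1}_{s_0...s_{i−1}} Oᵀ |y^i_{s_0...s_i}⟩ λ^i_{s_0...s_i} dO (with dO the Haar probability measure on the compact group O(D) of D×D real orthogonal matrices, acting on ℂ^D via the inclusion of real matrices into complex matrices) satisfies ∑_{(s_0,...,s_k) ∈ {1,...,D_m}^{k+1}} |P_k(s_0,...,s_k) − Q_k^O(s_0,...,s_k)| ≤ C · k³ / 2^ℓ. -/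

import Mathlib

open MeasureTheory Matrix
open scoped ComplexOrder

noncomputable instance {m n α : Type*} [MeasurableSpace α] : MeasurableSpace (Matrix m n α) :=
  inferInstanceAs (MeasurableSpace (m → n → α))

/-! Replace the states by the maximally mixed state one at a time, which telescopes the distance
over `k` hybrids. In the step that replaces `σ`, fix the other outcomes and let `K` be the average
of `O σ Oᵀ` over Haar-distributed `O`, weighted by the probability of the history. Left invariance
makes `K` commute with every orthogonal matrix fixing the history vectors, so `K` is scalar off the
real span `R` of their real and imaginary parts, which has dimension at most twice the number of
steps. The next measurement therefore deviates from the uniform one by at most a multiple of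
`tr (K R)` and a dimension count.

To bound the expected overlap `tr (K R)`, integrate by parts along the elementary rotations and sum:
the Casimir identity for `∑ ⁅J, ⁅J, M⁆⁆` produces the factor `D`, while the cross terms are
commutators `⁅σ, R⁆`, `⁅σᵢ, X⁆`, split by AM-GM with a parameter of order `k` into a history weight
and an overlap with one step removed. Each replacement costs `O(k² / D)`, and all of them together
`O(k³ / D)`. -/

theorem integrable_of_continuous_of_compactSpace {X E : Type*} [TopologicalSpace X]
    [CompactSpace X] [MeasurableSpace X] [OpensMeasurableSpace X] [NormedAddCommGroup E]
    [SecondCountableTopologyEither X E] (μ : Measure X) [IsFiniteMeasureOnCompacts μ] {f : X → E}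
    (hf : Continuous f) : Integrable f μ :=
  hf.integrable_of_hasCompactSupport (.of_compactSpace f)

section CompactGroup

variable {G E : Type*} [TopologicalSpace G] [Group G] [IsTopologicalGroup G] [CompactSpace G]
  [MeasurableSpace G] [BorelSpace G] [NormedAddCommGroup E] [NormedSpace ℝ E]

theorem integral_eq_zero_of_hasDerivAt_mul_left [SecondCountableTopologyEither G E]
    (μ : Measure G) [μ.IsHaarMeasure] {F F' : G → E} (hF : Continuous F) (hF' : Continuous F')
    {R : ℝ → G} (hR : ∀ s t, R (s + t) = R s * R t)
    (hderiv : ∀ x, HasDerivAt (fun t => F (R t * x)) (F' x) 0) : ∫ x, F' x ∂μ = 0 := by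
  have hR₀ : R 0 = 1 := by simpa using hR 0 0
  have hderiv_at (x : G) (t : ℝ) : HasDerivAt (fun u => F (R u * x)) (F' (R t * x)) t := by
    have h := HasDerivAt.comp_sub_const t t (by simpa using hderiv (R t * x))
    simpa only [← mul_assoc, ← hR, sub_add_cancel] using h
  obtain ⟨K, hK⟩ := (isCompact_range hF'.norm).bddAbove
  have hint {f : G → E} (hf : Continuous f) : Integrable f μ :=
    integrable_of_continuous_of_compactSpace μ hf
  have hd := hasDerivAt_integral_of_dominated_loc_of_deriv_le (μ := μ) (x₀ := (0 : ℝ))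
    (F := fun t x => F (R t * x)) (F' := fun t x => F' (R t * x)) (bound := fun _ => K)
    Filter.univ_mem
    (.of_forall fun t => (hint (hF.comp (continuous_const_mul _))).aestronglyMeasurable)
    (hint (hF.comp (continuous_const_mul _)))
    (hint (hF'.comp (continuous_const_mul _))).aestronglyMeasurable
    (.of_forall fun x t _ => hK ⟨_, rfl⟩) (integrable_const K)
    (.of_forall fun x t _ => hderiv_at x t)
  simp only [integral_mul_left_eq_self (μ := μ) F, hR₀, one_mul] at hd
  exact hd.2.unique (hasDerivAt_const _ _)

end CompactGroup

section OrthogonalGroup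

instance {m n : Type*} [Countable m] [Countable n] : BorelSpace (Matrix m n ℝ) :=
  inferInstanceAs (BorelSpace (m → n → ℝ))

variable {ι : Type*} [Fintype ι] [DecidableEq ι]

instance : BorelSpace (unitaryGroup ι ℝ) :=
  inferInstanceAs (BorelSpace {M : Matrix ι ι ℝ // M ∈ unitaryGroup ι ℝ})

instance : CompactSpace (unitaryGroup ι ℝ) := by
  refine isCompact_iff_compactSpace.mp (.of_isClosed_subset (X := Matrix ι ι ℝ)
    (isCompact_univ_pi fun _ => isCompact_univ_pi fun _ => isCompact_Icc (a := -1) (b := 1))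
    isClosed_unitary fun M hM i _ j _ => abs_le.mp (entry_norm_bound_of_unitary hM i j))

/-- Entrywise inclusion of real matrices into complex matrices, as a star homomorphism. -/
noncomputable def complexify : Matrix ι ι ℝ →⋆ₐ[ℝ] Matrix ι ι ℂ where
  __ := Complex.ofRealAm.mapMatrix
  map_star' A := by
    ext i j
    simp [star_apply]

theorem complexify_apply (A : Matrix ι ι ℝ) : complexify A = A.map Complex.ofReal := rfl

theorem continuous_complexify : Continuous (complexify : Matrix ι ι ℝ → Matrix ι ι ℂ) :=
  continuous_id.matrix_map Complex.continuous_ofReal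

theorem complexify_single_one (i j : ι) : complexify (single i j 1) = single i j 1 := by
  rw [complexify_apply, ← Complex.ofReal_one]
  exact map_single i j 1 Complex.ofRealHom

theorem transpose_complexify (A : Matrix ι ι ℝ) : (complexify A)ᵀ = star (complexify A) := by
  ext i j
  simp [complexify_apply, star_apply]

/-- Conjugation `M ↦ O M Oᵀ` of complex matrices by a real orthogonal matrix `O`, bundled as an
automorphism of the star algebra of complex matrices. -/
noncomputable def orthConj : unitaryGroup ι ℝ →* (Matrix ι ι ℂ ≃⋆ₐ[ℂ] Matrix ι ι ℂ) :=
  (Unitary.conjStarAlgAut ℂ (Matrix ι ι ℂ)).comp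
    (Unitary.map (.ofClass (complexify : Matrix ι ι ℝ →⋆ₐ[ℝ] Matrix ι ι ℂ))).toMonoidHom

theorem orthConj_apply (O : unitaryGroup ι ℝ) (M : Matrix ι ι ℂ) :
    orthConj O M = complexify O.1 * M * star (complexify O.1) := rfl

theorem orthConj_eq_mul_mul_transpose (O : unitaryGroup ι ℝ) (M : Matrix ι ι ℂ) :
    orthConj O M = O.1.map Complex.ofReal * M * (O.1.map Complex.ofReal)ᵀ := by
  rw [orthConj_apply, ← transpose_complexify, complexify_apply]

theorem continuous_orthConj (M : Matrix ι ι ℂ) :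
    Continuous fun O : unitaryGroup ι ℝ => orthConj O M := by
  have := continuous_complexify.comp (continuous_subtype_val (p := (· ∈ unitaryGroup ι ℝ)))
  simp only [orthConj_apply]
  exact (this.matrix_mul continuous_const).matrix_mul this.star

theorem transpose_orthConj (O : unitaryGroup ι ℝ) (M : Matrix ι ι ℂ) :
    (orthConj O M)ᵀ = orthConj O Mᵀ := by
  simp only [orthConj_apply, transpose_mul, ← transpose_complexify, transpose_transpose, mul_assoc]

theorem trace_orthConj (O : unitaryGroup ι ℝ) (M : Matrix ι ι ℂ) :
    (orthConj O M).trace = M.trace := by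
  rw [orthConj_apply, trace_mul_cycle, ← map_star, ← map_mul, mem_unitaryGroup_iff'.mp O.2, map_one,
    one_mul]

end OrthogonalGroup

theorem mul_eq_self_of_isSelfAdjoint {R : Type*} [Mul R] [StarMul R] {p y : R}
    (hp : IsSelfAdjoint p) (hy : IsSelfAdjoint y) (h : p * y = y) : y * p = y := by
  simpa only [star_mul, hp.star_eq, hy.star_eq] using congrArg star h

/-- The real bilinear form `(X, M) ↦ Re tr(X M)` on complex matrices; on Hermitian matrices it is
the Hilbert–Schmidt inner product, that is, the expectation of the observable `X` in the state
`M`. -/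
noncomputable def tracePairing {ι : Type*} [Fintype ι] :
    Matrix ι ι ℂ →ₗ[ℝ] Matrix ι ι ℂ →ₗ[ℝ] ℝ :=
  LinearMap.mk₂ ℝ (fun X M => (X * M).trace.re)
    (fun X Y M => by simp [add_mul]) (fun c X M => by simp)
    (fun X M N => by simp [mul_add]) (fun c X M => by simp)

local notation "⟪" X "," M "⟫" => tracePairing X M

section TracePairing

open scoped MatrixOrder

variable {ι : Type*} [Fintype ι] {X M P Y ρ σ : Matrix ι ι ℂ}

theorem trace_mul_nonneg (hX : 0 ≤ X) (hM : 0 ≤ M) : 0 ≤ (X * M).trace := by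
  classical
  obtain ⟨B, rfl⟩ := CStarAlgebra.nonneg_iff_eq_star_mul_self.mp hX
  rw [mul_assoc, trace_mul_comm]
  exact (nonneg_iff_posSemidef.mp (star_right_conjugate_nonneg hM B)).trace_nonneg

theorem tracePairing_apply (X M : Matrix ι ι ℂ) : ⟪X, M⟫ = (X * M).trace.re := rfl

theorem tracePairing_comm (X M : Matrix ι ι ℂ) : ⟪X, M⟫ = ⟪M, X⟫ := by
  rw [tracePairing_apply, trace_mul_comm, tracePairing_apply]

theorem tracePairing_transpose (X M : Matrix ι ι ℂ) : ⟪Xᵀ, Mᵀ⟫ = ⟪X, M⟫ := by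
  rw [tracePairing_apply, ← transpose_mul, trace_transpose, tracePairing_comm, tracePairing_apply]

theorem tracePairing_lie_rotate (X J M : Matrix ι ι ℂ) : ⟪X, ⁅J, M⁆⟫ = ⟪⁅M, X⁆, J⟫ := by
  simp only [tracePairing_apply, Ring.lie_def, mul_sub, sub_mul, trace_sub, ← mul_assoc]
  rw [trace_mul_cycle X J M, trace_mul_cycle M X J, trace_mul_cycle X M J]

theorem tracePairing_lie_right (X J M : Matrix ι ι ℂ) : ⟪X, ⁅J, M⁆⟫ = ⟪⁅X, J⁆, M⟫ := by
  simp only [tracePairing_apply, Ring.lie_def, mul_sub, sub_mul, trace_sub, ← mul_assoc]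
  rw [trace_mul_cycle X M J]

theorem tracePairing_nonneg (hX : 0 ≤ X) (hM : 0 ≤ M) : 0 ≤ ⟪X, M⟫ :=
  (Complex.nonneg_iff.mp (trace_mul_nonneg hX hM)).1

theorem ofReal_tracePairing (hX : 0 ≤ X) (hM : 0 ≤ M) : (⟪X, M⟫ : ℂ) = (X * M).trace :=
  Complex.ext rfl (Complex.nonneg_iff.mp (trace_mul_nonneg hX hM)).2

theorem tracePairing_mono (hX : 0 ≤ X) {M N : Matrix ι ι ℂ} (h : M ≤ N) : ⟪X, M⟫ ≤ ⟪X, N⟫ := by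
  rw [← sub_nonneg, ← map_sub]
  exact tracePairing_nonneg hX (sub_nonneg.mpr h)

variable [DecidableEq ι]

theorem tracePairing_orthConj (O : unitaryGroup ι ℝ) (X M : Matrix ι ι ℂ) :
    ⟪orthConj O X, orthConj O M⟫ = ⟪X, M⟫ := by
  rw [tracePairing_apply, ← map_mul, trace_orthConj, tracePairing_apply]

theorem le_trace_smul_one (hM : 0 ≤ M) : M ≤ ⟪M, 1⟫ • 1 := by
  have hM' := nonneg_iff_posSemidef.mp hM
  rw [← Algebra.algebraMap_eq_smul_one]
  refine le_algebraMap_of_spectrum_le fun r hr => ?_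
  obtain ⟨i, rfl⟩ := hM'.isHermitian.spectrum_real_eq_range_eigenvalues ▸ hr
  rw [tracePairing_apply, mul_one, hM'.isHermitian.trace_eq_sum_eigenvalues]
  simpa using Finset.single_le_sum (fun j _ => hM'.eigenvalues_nonneg j) (Finset.mem_univ i)

theorem tracePairing_le_mul_of_mul_eq_self (hY : 0 ≤ Y) (hρ : 0 ≤ ρ) (hP : IsStarProjection P)
    (hPY : P * Y = Y) : ⟪Y, ρ⟫ ≤ ⟪Y, 1⟫ * ⟪P, ρ⟫ := by
  have hYP : Y * P = Y := mul_eq_self_of_isSelfAdjoint hP.isSelfAdjoint (.of_nonneg hY) hPY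
  have hle : Y ≤ ⟪Y, 1⟫ • P := by
    have h := hP.isSelfAdjoint.conjugate_le_conjugate (le_trace_smul_one hY)
    rwa [hPY, hYP, mul_smul_comm, mul_one, smul_mul_assoc, hP.isIdempotentElem.eq] at h
  rw [tracePairing_comm, tracePairing_comm P]
  simpa using tracePairing_mono hρ hle

theorem conjugate_le_self_of_le_one {Q : Matrix ι ι ℂ} (hM : 0 ≤ M) (hM₁ : M ≤ 1) (hQ : Q ≤ 1) :
    M * Q * M ≤ M := by
  have hM_sub : 0 ≤ 1 - M := sub_nonneg.mpr hM₁
  calc M * Q * M ≤ M * 1 * M := conjugate_le_conjugate_of_nonneg hQ hM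
    _ ≤ M * 1 * M + (M * (1 - M) * M + (1 - M) * M * (1 - M)) :=
      le_add_of_nonneg_right
        (add_nonneg (conjugate_nonneg_of_nonneg hM_sub hM) (conjugate_nonneg_of_nonneg hM hM_sub))
    _ = M := by noncomm_ring

theorem neg_tracePairing_lie_lie_le (hρ : 0 ≤ ρ) (hρ₁ : ρ ≤ 1) (hσ : 0 ≤ σ) (hσ₁ : σ ≤ 1)
    (hY : 0 ≤ Y) (hP : IsStarProjection P) (hPY : P * Y = Y) {c : ℝ} (hc : 0 < c) :
    -⟪⁅ρ, P⁆, ⁅σ, Y⁆⟫ ≤ c * ⟪Y, σ⟫ + c⁻¹ * ⟪Y, ρ⟫ := by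
  have hYP : Y * P = Y := mul_eq_self_of_isSelfAdjoint hP.isSelfAdjoint (.of_nonneg hY) hPY
  have hcross : ⟪⁅ρ, P⁆, ⁅σ, Y⁆⟫ = -⟪Y, ρ * (1 - P) * σ + σ * (1 - P) * ρ⟫ := by
    have hlie : ⁅Y, ⁅ρ, P⁆⁆ = -(Y * (ρ * (1 - P)) + (1 - P) * (ρ * Y)) := by
      have h : ⁅Y, ⁅ρ, P⁆⁆ = Y * ρ * P - Y * P * ρ - (ρ * (P * Y) - P * ρ * Y) := by
        simp only [Ring.lie_def]
        noncomm_ring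
      rw [h, hPY, hYP]
      noncomm_ring
    rw [tracePairing_lie_rotate, hlie, map_neg, LinearMap.neg_apply, map_add, map_add,
      LinearMap.add_apply]
    simp only [tracePairing_apply, mul_assoc]
    rw [trace_mul_comm (1 - P), mul_assoc, trace_mul_comm ρ]
    simp only [mul_assoc]
  have hsq : 0 ≤ (c • σ - ρ) * (1 - P) * (c • σ - ρ) :=
    (((IsSelfAdjoint.all c).smul (.of_nonneg hσ)).sub (.of_nonneg hρ)).conjugate_nonneg
      hP.one_sub.nonneg
  have hsq' : c * ⟪Y, ρ * (1 - P) * σ + σ * (1 - P) * ρ⟫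
      ≤ c ^ 2 * ⟪Y, σ * (1 - P) * σ⟫ + ⟪Y, ρ * (1 - P) * ρ⟫ := by
    rw [← sub_nonneg]
    convert tracePairing_nonneg hY hsq using 1
    simp only [mul_sub, sub_mul, smul_mul_assoc, mul_smul_comm, map_sub, map_add, map_smul,
      smul_eq_mul]
    ring
  have hσσ := tracePairing_mono hY (conjugate_le_self_of_le_one hσ hσ₁ (sub_le_self 1 hP.nonneg))
  have hρρ := tracePairing_mono hY (conjugate_le_self_of_le_one hρ hρ₁ (sub_le_self 1 hP.nonneg))
  rw [hcross, neg_neg]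
  refine le_of_mul_le_mul_left ?_ hc
  calc _ ≤ _ := hsq'
    _ ≤ c ^ 2 * ⟪Y, σ⟫ + ⟪Y, ρ⟫ := by gcongr
    _ = _ := by field_simp

end TracePairing

section SkewUnit

variable {ι R : Type*} [DecidableEq ι] [CommRing R]

/-- The elementary skew-symmetric matrix `E a b - E b a`, the infinitesimal rotation in the
coordinate plane `(a, b)`. -/
def skewUnit (R : Type*) [CommRing R] (a b : ι) : Matrix ι ι R := single a b 1 - single b a 1

theorem skewUnit_mem_skewAdjoint (a b : ι) : skewUnit ℝ a b ∈ skewAdjoint (Matrix ι ι ℝ) := by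
  simp [skewAdjoint.mem_iff, skewUnit, star_eq_conjTranspose]

variable [Fintype ι]

theorem skewUnit_mul_mul_skewUnit (a b : ι) (M : Matrix ι ι R) :
    skewUnit R a b * M * skewUnit R a b =
      single a b (M b a) + single b a (M a b) - single a a (M b b) - single b b (M a a) := by
  simp only [skewUnit, sub_mul, mul_sub, single_mul_mul_single, one_mul, mul_one]
  abel

theorem sum_sum_single_diag (f : ι → R) :
    ∑ a, ∑ b, single a a (f b) = (∑ b, f b) • (1 : Matrix ι ι R) := by
  rw [Finset.sum_comm, Finset.sum_smul, ← sum_single_one]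
  simp only [Finset.smul_sum, smul_single, smul_eq_mul, mul_one]

theorem sum_skewUnit_mul_mul_skewUnit (M : Matrix ι ι R) :
    ∑ a, ∑ b, skewUnit R a b * M * skewUnit R a b = 2 • Mᵀ - (2 * M.trace) • 1 := by
  have htranspose : ∑ a, ∑ b, single a b (M b a) = Mᵀ := (matrix_eq_sum_single Mᵀ).symm
  simp only [skewUnit_mul_mul_skewUnit, Finset.sum_sub_distrib, Finset.sum_add_distrib]
  rw [Finset.sum_comm (f := fun a b => single b a (M a b)),
    Finset.sum_comm (f := fun a b => single b b (M a a)), htranspose,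
    sum_sum_single_diag (fun b => M b b)]
  simp only [trace, diag, mul_smul, two_smul]
  abel

theorem sum_lie_lie_skewUnit (M : Matrix ι ι R) :
    ∑ a : ι, ∑ b : ι, ⁅skewUnit R a b, ⁅skewUnit R a b, M⁆⁆ =
      (4 * M.trace) • (1 : Matrix ι ι R) - (4 * ((Fintype.card ι : R) - 1)) • M - (4 : R) • Mᵀ := by
  have hlie (J : Matrix ι ι R) :
      ⁅J, ⁅J, M⁆⁆ = J * 1 * J * M + M * (J * 1 * J) - 2 • (J * M * J) := by
    simp only [Ring.lie_def]
    noncomm_ring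
  simp only [hlie, Finset.sum_sub_distrib, Finset.sum_add_distrib, ← Finset.sum_mul,
    ← Finset.mul_sum, ← Finset.smul_sum, sum_skewUnit_mul_mul_skewUnit, transpose_one, trace_one]
  simp only [mul_smul, sub_smul, smul_sub, sub_mul, mul_sub, smul_mul_assoc, mul_smul_comm,
    one_mul, mul_one]
  module

end SkewUnit

section LieTracePairing

variable {ι : Type*} [Fintype ι] [DecidableEq ι]

theorem sum_tracePairing_smul_skewUnit {C : Matrix ι ι ℂ} (hC : Cᵀ = -C) (hC' : star C = -C) :
    ∑ a, ∑ b, ⟪C, skewUnit ℂ a b⟫ • skewUnit ℂ a b = (-4 : ℝ) • C := by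
  have hre (a b : ι) : ((C a b).re : ℂ) = C a b := by
    rw [← Complex.conj_eq_iff_re]
    simpa using congr_fun₂ (hC'.trans hC.symm) b a
  have hpair (a b : ι) : ⟪C, skewUnit ℂ a b⟫ = -2 * (C a b).re := by
    have h : C b a = -C a b := congr_fun₂ hC a b
    simp [tracePairing_apply, skewUnit, mul_sub, trace_mul_single, h]
    ring
  have hsum : ∑ a, ∑ b, C a b • skewUnit ℂ a b = 2 • C := by
    simp only [skewUnit, smul_sub, smul_single, smul_eq_mul, mul_one, Finset.sum_sub_distrib]
    have htranspose : ∑ b, ∑ a, single b a (C a b) = Cᵀ := (matrix_eq_sum_single Cᵀ).symm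
    rw [Finset.sum_comm (f := fun a b => single b a (C a b)), ← matrix_eq_sum_single, htranspose,
      hC, sub_neg_eq_add, two_smul]
  have hterm (a b : ι) :
      ⟪C, skewUnit ℂ a b⟫ • skewUnit ℂ a b = (-2 : ℂ) • C a b • skewUnit ℂ a b := by
    rw [hpair, ← Complex.coe_smul, Complex.ofReal_mul, hre, smul_smul]
    norm_num
  simp only [hterm, ← Finset.smul_sum, hsum]
  module

theorem sum_tracePairing_lie_lie_skewUnit {P ρ : Matrix ι ι ℂ} (hP : Pᵀ = P)
    (hρ : ρ.trace = 1) :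
    ∑ a : ι, ∑ b : ι, ⟪P, ⁅skewUnit ℂ a b, ⁅skewUnit ℂ a b, ρ⁆⁆⟫ =
      4 * (⟪P, 1⟫ - Fintype.card ι * ⟪P, ρ⟫) := by
  have hPρ : ⟪P, ρᵀ⟫ = ⟪P, ρ⟫ := by rw [← tracePairing_transpose P ρ, hP]
  have hsum : ∑ a : ι, ∑ b : ι, ⁅skewUnit ℂ a b, ⁅skewUnit ℂ a b, ρ⁆⁆ =
      (4 : ℝ) • (1 - ((Fintype.card ι : ℝ) - 1) • ρ - ρᵀ) := by
    rw [sum_lie_lie_skewUnit, hρ]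
    module
  simp only [← map_sum, hsum, map_smul, map_sub, hPρ, smul_eq_mul]
  ring

theorem sum_tracePairing_lie_mul_tracePairing_lie_skewUnit {P ρ : Matrix ι ι ℂ} (hP : Pᵀ = P)
    (hP' : IsSelfAdjoint P) (hρ : ρᵀ = ρ) (hρ' : IsSelfAdjoint ρ) (X σ : Matrix ι ι ℂ) :
    ∑ a : ι, ∑ b : ι, ⟪P, ⁅skewUnit ℂ a b, ρ⁆⟫ * ⟪X, ⁅skewUnit ℂ a b, σ⁆⟫ =
      -4 * ⟪⁅ρ, P⁆, ⁅σ, X⁆⟫ := by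
  have hC : ⁅ρ, P⁆ᵀ = -⁅ρ, P⁆ := by
    simp [Ring.lie_def, hP, hρ]
  have hC' : star ⁅ρ, P⁆ = -⁅ρ, P⁆ := by
    simp [Ring.lie_def, hP'.star_eq, hρ'.star_eq]
  simp_rw [tracePairing_lie_rotate _ (skewUnit ℂ _ _), ← smul_eq_mul (a := ⟪⁅ρ, P⁆, _⟫),
    ← map_smul, ← map_sum]
  rw [sum_tracePairing_smul_skewUnit hC hC', map_smul, smul_eq_mul, tracePairing_comm]

theorem complexify_skewUnit (a b : ι) : complexify (skewUnit ℝ a b) = skewUnit ℂ a b := by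
  rw [skewUnit, map_sub, complexify_single_one, complexify_single_one, skewUnit]

end LieTracePairing

section Rotation

open scoped Matrix.Norms.L2Operator

variable {ι : Type*} [Fintype ι] [DecidableEq ι]

/-- The rotation `exp (t A)` generated by a real skew-symmetric matrix `A`. -/
noncomputable def orthExp (A : skewAdjoint (Matrix ι ι ℝ)) (t : ℝ) : unitaryGroup ι ℝ :=
  ⟨NormedSpace.exp (t • A.1), by
    let +nondep : NormedAlgebra ℚ (Matrix ι ι ℝ) := .restrictScalars ℚ ℝ _
    exact NormedSpace.exp_mem_unitary_of_mem_skewAdjoint (skewAdjoint.smul_mem t A.2)⟩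

theorem orthExp_add (A : skewAdjoint (Matrix ι ι ℝ)) (s t : ℝ) :
    orthExp A (s + t) = orthExp A s * orthExp A t := by
  have h : Commute (s • A.1) (t • A.1) := ((Commute.refl A.1).smul_left s).smul_right t
  exact Subtype.ext <| by simpa only [orthExp, add_smul] using! Matrix.exp_add_of_commute _ _ h

theorem orthExp_zero (A : skewAdjoint (Matrix ι ι ℝ)) : orthExp A 0 = 1 := by
  simpa using orthExp_add A 0 0

theorem hasDerivAt_orthConj_orthExp (A : skewAdjoint (Matrix ι ι ℝ)) (M : Matrix ι ι ℂ) :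
    HasDerivAt (fun t => orthConj (orthExp A t) M) ⁅complexify A.1, M⁆ 0 := by
  have hexp : HasDerivAt (fun t : ℝ => complexify (orthExp A t).1) (complexify A.1) 0 := by
    have h : (fun t : ℝ => complexify (orthExp A t).1) =
        fun t : ℝ => NormedSpace.exp (t • complexify A.1) := by
      ext1 t
      change complexify (NormedSpace.exp (t • A.1)) = _
      let +nondep : NormedAlgebra ℚ (Matrix ι ι ℝ) := .restrictScalars ℚ ℝ _
      let +nondep : NormedAlgebra ℚ (Matrix ι ι ℂ) := .restrictScalars ℚ ℝ _
      rw [NormedSpace.map_exp (complexify (ι := ι)) continuous_complexify, map_smul]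
    rw [h]
    simpa using hasDerivAt_exp_smul_const (complexify A.1) (0 : ℝ)
  have hstar : star (complexify A.1) = -complexify A.1 := by
    rw [← map_star, skewAdjoint.mem_iff.mp A.2, map_neg]
  have hzero : complexify (orthExp A 0).1 = 1 := by
    rw [orthExp_zero, OneMemClass.coe_one, map_one]
  refine ((hexp.mul_const M).mul hexp.star).congr_deriv ?_
  rw [hzero, hstar, star_one, Ring.lie_def]
  noncomm_ring

end Rotation

section IntegrationByParts

open scoped Matrix.Norms.L2Operator MatrixOrder

variable {ι κ : Type*} [Fintype ι] [DecidableEq ι]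

/-- The product of the expectations `⟪X i, O (σ i) Oᵀ⟫` over `i ∈ S`. -/
noncomputable def pairingProd (X σ : κ → Matrix ι ι ℂ) (S : Finset κ) (O : unitaryGroup ι ℝ) : ℝ :=
  ∏ i ∈ S, ⟪X i, orthConj O (σ i)⟫

theorem continuous_tracePairing_orthConj (X M : Matrix ι ι ℂ) :
    Continuous fun O : unitaryGroup ι ℝ => ⟪X, orthConj O M⟫ :=
  (tracePairing X).continuous_of_finiteDimensional.comp (continuous_orthConj M)

theorem continuous_pairingProd (X σ : κ → Matrix ι ι ℂ) (S : Finset κ) :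
    Continuous (pairingProd X σ S) :=
  continuous_finsetProd _ fun i _ => continuous_tracePairing_orthConj (X i) (σ i)

theorem hasDerivAt_tracePairing_orthExp (A : skewAdjoint (Matrix ι ι ℝ)) (O : unitaryGroup ι ℝ)
    (X M : Matrix ι ι ℂ) :
    HasDerivAt (fun t => ⟪X, orthConj (orthExp A t * O) M⟫)
      ⟪X, ⁅complexify A.1, orthConj O M⁆⟫ 0 := by
  simpa only [map_mul, StarAlgEquiv.mul_apply] using!
    (tracePairing X).toContinuousLinearMap.hasFDerivAt.comp_hasDerivAt 0
      (hasDerivAt_orthConj_orthExp A (orthConj O M))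

variable [DecidableEq κ]

theorem hasDerivAt_pairingProd_orthExp (A : skewAdjoint (Matrix ι ι ℝ)) (O : unitaryGroup ι ℝ)
    (X σ : κ → Matrix ι ι ℂ) (S : Finset κ) :
    HasDerivAt (fun t => pairingProd X σ S (orthExp A t * O))
      (∑ i ∈ S, ⟪X i, ⁅complexify A.1, orthConj O (σ i)⁆⟫ * pairingProd X σ (S.erase i) O) 0 := by
  have h := HasDerivAt.fun_finsetProd (u := S) fun i _ =>
    hasDerivAt_tracePairing_orthExp A O (X i) (σ i)
  simpa only [pairingProd, orthExp_zero, one_mul, smul_eq_mul, mul_comm] using h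

theorem sum_lie_lie_mul_pairingProd_skewUnit {P ρ : Matrix ι ι ℂ} (hP : Pᵀ = P)
    (hP' : IsSelfAdjoint P) (hρ : ρᵀ = ρ) (hρ' : IsSelfAdjoint ρ) (hρ_trace : ρ.trace = 1)
    (X σ : κ → Matrix ι ι ℂ) (S : Finset κ) (O : unitaryGroup ι ℝ) :
    ∑ a : ι, ∑ b : ι,
      (⟪P, ⁅skewUnit ℂ a b, ⁅skewUnit ℂ a b, orthConj O ρ⁆⁆⟫ * pairingProd X σ S O +
        ⟪P, ⁅skewUnit ℂ a b, orthConj O ρ⁆⟫ *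
          ∑ i ∈ S, ⟪X i, ⁅skewUnit ℂ a b, orthConj O (σ i)⁆⟫ * pairingProd X σ (S.erase i) O) =
      4 * (⟪P, 1⟫ * pairingProd X σ S O -
        Fintype.card ι * (⟪P, orthConj O ρ⟫ * pairingProd X σ S O) -
        ∑ i ∈ S, ⟪⁅orthConj O ρ, P⁆, ⁅orthConj O (σ i), X i⁆⟫ *
          pairingProd X σ (S.erase i) O) := by
  simp only [Finset.sum_add_distrib, ← Finset.sum_mul]
  rw [sum_tracePairing_lie_lie_skewUnit hP ((trace_orthConj O ρ).trans hρ_trace)]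
  have hcross : ∑ a : ι, ∑ b : ι, ⟪P, ⁅skewUnit ℂ a b, orthConj O ρ⁆⟫ *
      ∑ i ∈ S, ⟪X i, ⁅skewUnit ℂ a b, orthConj O (σ i)⁆⟫ * pairingProd X σ (S.erase i) O =
      ∑ i ∈ S, -4 * ⟪⁅orthConj O ρ, P⁆, ⁅orthConj O (σ i), X i⁆⟫ *
        pairingProd X σ (S.erase i) O := by
    simp_rw [Finset.mul_sum, Finset.sum_comm (s := Finset.univ) (t := S), ← mul_assoc,
      ← Finset.sum_mul]
    refine Finset.sum_congr rfl fun i _ => ?_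
    rw [sum_tracePairing_lie_mul_tracePairing_lie_skewUnit hP hP'
      ((transpose_orthConj O ρ).trans (by rw [hρ])) (hρ'.map (orthConj O))]
  simp only [hcross, mul_assoc, ← Finset.mul_sum]
  ring

variable (μ : Measure (unitaryGroup ι ℝ)) [μ.IsHaarMeasure]

theorem integral_lie_lie_mul_pairingProd (A : skewAdjoint (Matrix ι ι ℝ)) (P ρ : Matrix ι ι ℂ)
    (X σ : κ → Matrix ι ι ℂ) (S : Finset κ) :
    ∫ O, (⟪P, ⁅complexify A.1, ⁅complexify A.1, orthConj O ρ⁆⁆⟫ * pairingProd X σ S O +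
      ⟪P, ⁅complexify A.1, orthConj O ρ⁆⟫ *
        ∑ i ∈ S, ⟪X i, ⁅complexify A.1, orthConj O (σ i)⁆⟫ * pairingProd X σ (S.erase i) O) ∂μ
      = 0 := by
  simp only [tracePairing_lie_right]
  refine integral_eq_zero_of_hasDerivAt_mul_left μ
    (F := fun O => ⟪⁅P, complexify A.1⁆, orthConj O ρ⟫ * pairingProd X σ S O) ?_ ?_
    (orthExp_add A) fun O => ?_
  · exact (continuous_tracePairing_orthConj _ _).mul (continuous_pairingProd X σ S)
  · exact ((continuous_tracePairing_orthConj _ _).mul (continuous_pairingProd X σ S)).add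
      ((continuous_tracePairing_orthConj _ _).mul (continuous_finsetSum _ fun i _ =>
        (continuous_tracePairing_orthConj _ _).mul (continuous_pairingProd X σ _)))
  · simpa only [orthExp_zero, one_mul, tracePairing_lie_right] using!
      (hasDerivAt_tracePairing_orthExp A O ⁅P, complexify A.1⁆ ρ).fun_mul
        (hasDerivAt_pairingProd_orthExp A O X σ S)

theorem card_mul_integral_tracePairing_mul_pairingProd {P ρ : Matrix ι ι ℂ} (hP : Pᵀ = P)
    (hP' : IsSelfAdjoint P) (hρ : ρᵀ = ρ) (hρ' : IsSelfAdjoint ρ) (hρ_trace : ρ.trace = 1)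
    (X σ : κ → Matrix ι ι ℂ) (S : Finset κ) :
    Fintype.card ι * ∫ O, ⟪P, orthConj O ρ⟫ * pairingProd X σ S O ∂μ =
      ⟪P, 1⟫ * ∫ O, pairingProd X σ S O ∂μ -
        ∑ i ∈ S, ∫ O, ⟪⁅orthConj O ρ, P⁆, ⁅orthConj O (σ i), X i⁆⟫ *
          pairingProd X σ (S.erase i) O ∂μ := by
  have hcont (M : Matrix ι ι ℂ) := continuous_orthConj (ι := ι) M
  have hprod (S : Finset κ) := continuous_pairingProd X σ S
  have hcont_cross (i : κ) : Continuous fun O =>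
      ⟪⁅orthConj O ρ, P⁆, ⁅orthConj O (σ i), X i⁆⟫ * pairingProd X σ (S.erase i) O := by
    simp only [tracePairing_apply, Ring.lie_def]
    fun_prop
  have hcont_ibp (A : Matrix ι ι ℂ) : Continuous fun O =>
      ⟪P, ⁅A, ⁅A, orthConj O ρ⁆⁆⟫ * pairingProd X σ S O + ⟪P, ⁅A, orthConj O ρ⁆⟫ *
        ∑ i ∈ S, ⟪X i, ⁅A, orthConj O (σ i)⁆⟫ * pairingProd X σ (S.erase i) O := by
    simp only [tracePairing_apply, Ring.lie_def]
    fun_prop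
  have hint {f : unitaryGroup ι ℝ → ℝ} (hf : Continuous f) : Integrable f μ :=
    integrable_of_continuous_of_compactSpace μ hf
  have hint_prod := hint (hprod S)
  have hint_pair : Integrable (fun O => ⟪P, orthConj O ρ⟫ * pairingProd X σ S O) μ :=
    hint ((continuous_tracePairing_orthConj P ρ).mul (hprod S))
  have hint_cross (i : κ) := hint (hcont_cross i)
  have hsum := (integral_finsetSum (μ := μ) .univ fun a _ =>
      hint (continuous_finsetSum .univ fun b _ => hcont_ibp _)).trans <|
    Finset.sum_eq_zero fun a _ => (integral_finsetSum _ fun b _ => hint (hcont_ibp _)).trans <|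
      Finset.sum_eq_zero fun b _ => integral_lie_lie_mul_pairingProd μ
          ⟨skewUnit ℝ a b, skewUnit_mem_skewAdjoint a b⟩ P ρ X σ S
  simp only [complexify_skewUnit] at hsum
  rw [integral_congr_ae (.of_forall
      (sum_lie_lie_mul_pairingProd_skewUnit hP hP' hρ hρ' hρ_trace X σ S)), integral_const_mul,
    integral_sub ((hint_prod.const_mul _).sub' (hint_pair.const_mul _))
      (integrable_finsetSum _ fun i _ => hint_cross i),
    integral_sub (hint_prod.const_mul _) (hint_pair.const_mul _), integral_const_mul,
    integral_const_mul, integral_finsetSum _ fun i _ => hint_cross i] at hsum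
  linarith

end IntegrationByParts

section WeightedAverageBound

open scoped MatrixOrder

variable {ι κ : Type*} [Fintype ι] [DecidableEq ι] {M ρ P : Matrix ι ι ℂ}
  {X σ : κ → Matrix ι ι ℂ}

theorem orthConj_nonneg (O : unitaryGroup ι ℝ) (hM : 0 ≤ M) : 0 ≤ orthConj O M :=
  star_right_conjugate_nonneg hM _

theorem le_one_of_trace_eq_one (hM : 0 ≤ M) (hM_trace : M.trace = 1) : M ≤ 1 := by
  simpa [tracePairing_apply, hM_trace] using le_trace_smul_one hM

theorem pairingProd_nonneg {S : Finset κ} (hX : ∀ i, 0 ≤ X i) (hσ : ∀ i, 0 ≤ σ i)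
    (O : unitaryGroup ι ℝ) : 0 ≤ pairingProd X σ S O :=
  Finset.prod_nonneg fun i _ => tracePairing_nonneg (hX i) (orthConj_nonneg O (hσ i))

variable [DecidableEq κ]

theorem neg_tracePairing_lie_lie_mul_pairingProd_le (hP : IsStarProjection P) (hρ : 0 ≤ ρ)
    (hρ_trace : ρ.trace = 1) (hX : ∀ i, 0 ≤ X i) (hσ : ∀ i, 0 ≤ σ i)
    (hσ_trace : ∀ i, (σ i).trace = 1) {S : Finset κ} {i : κ} (hi : i ∈ S)
    (hPX : P * X i = X i) {c : ℝ} (hc : 0 < c) (O : unitaryGroup ι ℝ) :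
    -(⟪⁅orthConj O ρ, P⁆, ⁅orthConj O (σ i), X i⁆⟫ * pairingProd X σ (S.erase i) O) ≤
      c * pairingProd X σ S O +
        c⁻¹ * ⟪X i, 1⟫ * (⟪P, orthConj O ρ⟫ * pairingProd X σ (S.erase i) O) := by
  have hOρ := orthConj_nonneg O hρ
  have hOσ := orthConj_nonneg O (hσ i)
  have hlie := neg_tracePairing_lie_lie_le hOρ
    (le_one_of_trace_eq_one hOρ (by rwa [trace_orthConj])) hOσ
    (le_one_of_trace_eq_one hOσ (by rw [trace_orthConj, hσ_trace])) (hX i) hP hPX hc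
  have hXρ := tracePairing_le_mul_of_mul_eq_self (hX i) hOρ hP hPX
  have hsplit : pairingProd X σ S O =
      ⟪X i, orthConj O (σ i)⟫ * pairingProd X σ (S.erase i) O :=
    (Finset.mul_prod_erase S _ hi).symm
  rw [hsplit, ← neg_mul]
  calc _ ≤ (c * ⟪X i, orthConj O (σ i)⟫ + c⁻¹ * (⟪X i, 1⟫ * ⟪P, orthConj O ρ⟫)) *
        pairingProd X σ (S.erase i) O := by
        gcongr
        · exact pairingProd_nonneg hX hσ O
        · exact hlie.trans (by gcongr)
    _ = _ := by ring

variable (μ : Measure (unitaryGroup ι ℝ)) [μ.IsHaarMeasure]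

theorem card_mul_integral_tracePairing_mul_pairingProd_le_of_transpose_eq
    (hP : IsStarProjection P) (hPT : Pᵀ = P) (hρ : 0 ≤ ρ) (hρ_trace : ρ.trace = 1) (hρT : ρᵀ = ρ)
    (hX : ∀ i, 0 ≤ X i) (hσ : ∀ i, 0 ≤ σ i) (hσ_trace : ∀ i, (σ i).trace = 1) {S : Finset κ}
    (hPX : ∀ i ∈ S, P * X i = X i) {c : ℝ} (hc : 0 < c) :
    Fintype.card ι * ∫ O, ⟪P, orthConj O ρ⟫ * pairingProd X σ S O ∂μ ≤
      ⟪P, 1⟫ * ∫ O, pairingProd X σ S O ∂μ +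
        ∑ i ∈ S, (c * ∫ O, pairingProd X σ S O ∂μ +
          c⁻¹ * ⟪X i, 1⟫ * ∫ O, ⟪P, orthConj O ρ⟫ * pairingProd X σ (S.erase i) O ∂μ) := by
  have hint {f : unitaryGroup ι ℝ → ℝ} (hf : Continuous f) : Integrable f μ :=
    integrable_of_continuous_of_compactSpace μ hf
  have hcont (M : Matrix ι ι ℂ) := continuous_orthConj (ι := ι) M
  have hprod (S : Finset κ) := continuous_pairingProd X σ S
  have hcross (i : κ) : Continuous fun O =>
      ⟪⁅orthConj O ρ, P⁆, ⁅orthConj O (σ i), X i⁆⟫ * pairingProd X σ (S.erase i) O := by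
    simp only [tracePairing_apply, Ring.lie_def]
    fun_prop
  rw [card_mul_integral_tracePairing_mul_pairingProd μ hPT hP.isSelfAdjoint hρT (.of_nonneg hρ)
    hρ_trace, sub_eq_add_neg, ← Finset.sum_neg_distrib]
  gcongr with i hi
  have hprod_int := (hint (hprod S)).const_mul c
  have hpair_int : Integrable (fun O => c⁻¹ * ⟪X i, 1⟫ *
      (⟪P, orthConj O ρ⟫ * pairingProd X σ (S.erase i) O)) μ :=
    (hint ((continuous_tracePairing_orthConj P ρ).mul (hprod _))).const_mul _
  rw [← integral_neg, ← integral_const_mul, ← integral_const_mul,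
    ← integral_add hprod_int hpair_int]
  exact integral_mono (hint (hcross i)).neg (hprod_int.add hpair_int)
    (neg_tracePairing_lie_lie_mul_pairingProd_le hP hρ hρ_trace hX hσ hσ_trace hi (hPX i hi) hc)

theorem card_mul_integral_tracePairing_mul_pairingProd_le
    (hP : IsStarProjection P) (hPT : Pᵀ = P) (hρ : 0 ≤ ρ) (hρ_trace : ρ.trace = 1)
    (hX : ∀ i, 0 ≤ X i) (hσ : ∀ i, 0 ≤ σ i) (hσ_trace : ∀ i, (σ i).trace = 1) {S : Finset κ}
    (hPX : ∀ i ∈ S, P * X i = X i) {c : ℝ} (hc : 0 < c) :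
    Fintype.card ι * ∫ O, ⟪P, orthConj O ρ⟫ * pairingProd X σ S O ∂μ ≤
      ⟪P, 1⟫ * ∫ O, pairingProd X σ S O ∂μ +
        ∑ i ∈ S, (c * ∫ O, pairingProd X σ S O ∂μ +
          c⁻¹ * ⟪X i, 1⟫ * ∫ O, ⟪P, orthConj O ρ⟫ * pairingProd X σ (S.erase i) O ∂μ) := by
  -- Since `P` is symmetric, `ρ` may be replaced by its symmetrization.
  have hsymm (O : unitaryGroup ι ℝ) :
      ⟪P, orthConj O ρ⟫ = ⟪P, orthConj O ((2⁻¹ : ℂ) • (ρ + ρᵀ))⟫ := by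
    have h : ⟪P, orthConj O ρᵀ⟫ = ⟪P, orthConj O ρ⟫ := by
      rw [← transpose_orthConj, ← tracePairing_transpose, transpose_transpose, hPT]
    have hre (M : Matrix ι ι ℂ) : (2⁻¹ : ℂ) • M = (2⁻¹ : ℝ) • M := by module
    rw [map_smul, hre, map_smul, map_add, map_add, h, smul_eq_mul]
    ring
  simp only [hsymm]
  refine card_mul_integral_tracePairing_mul_pairingProd_le_of_transpose_eq μ hP hPT ?_ ?_ ?_ hX
    hσ hσ_trace hPX hc
  · have hρT : 0 ≤ ρᵀ := (nonneg_iff_posSemidef.mp hρ).transpose.nonneg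
    exact smul_nonneg (by positivity) (add_nonneg hρ hρT)
  · rw [trace_smul, trace_add, trace_transpose, hρ_trace]
    norm_num
  · rw [transpose_smul, transpose_add, transpose_transpose, add_comm]

end WeightedAverageBound

section RealProjection

variable {ι κ : Type*} [Fintype ι]

/-- The real span of the real and imaginary parts of a family of complex vectors. -/
def realPartSpan (z : κ → ι → ℂ) : Submodule ℝ (EuclideanSpace ℝ ι) :=
  .span ℝ (Set.range (Sum.elim (fun k => WithLp.toLp 2 fun x => (z k x).re)
    fun k => WithLp.toLp 2 fun x => (z k x).im))

variable [DecidableEq ι]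

/-- The matrix of the orthogonal projection onto `realPartSpan z`. It is the smallest real
projection whose complexification fixes every `z k`. -/
noncomputable def realProjection (z : κ → ι → ℂ) : Matrix ι ι ℝ :=
  (toEuclideanCLM (𝕜 := ℝ)).symm (realPartSpan z).starProjection

theorem isStarProjection_realProjection (z : κ → ι → ℂ) : IsStarProjection (realProjection z) :=
  let f : (EuclideanSpace ℝ ι →L[ℝ] EuclideanSpace ℝ ι) ≃⋆ₐ[ℝ] Matrix ι ι ℝ :=
    (toEuclideanCLM (𝕜 := ℝ)).symm
  have h : IsStarProjection (realPartSpan z).starProjection := isStarProjection_starProjection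
  ⟨h.isIdempotentElem.map f, (map_star f _).symm.trans (congrArg f h.isSelfAdjoint.star_eq)⟩

theorem transpose_complexify_realProjection (z : κ → ι → ℂ) :
    (complexify (realProjection z))ᵀ = complexify (realProjection z) := by
  rw [transpose_complexify, ← map_star, (isStarProjection_realProjection z).isSelfAdjoint.star_eq]

theorem realProjection_mulVec_of_mem {z : κ → ι → ℂ} {v : ι → ℝ}
    (hv : WithLp.toLp 2 v ∈ realPartSpan z) : realProjection z *ᵥ v = v := by
  have h := toEuclideanCLM_toLp (realProjection z) v
  rw [realProjection, StarAlgEquiv.apply_symm_apply, Submodule.starProjection_eq_self_iff.mpr hv]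
    at h
  exact (WithLp.toLp_injective 2 h).symm

theorem complexify_realProjection_mulVec (z : κ → ι → ℂ) (k : κ) :
    complexify (realProjection z) *ᵥ z k = z k := by
  have hre := realProjection_mulVec_of_mem (z := z) (Submodule.subset_span ⟨.inl k, rfl⟩)
  have him := realProjection_mulVec_of_mem (z := z) (Submodule.subset_span ⟨.inr k, rfl⟩)
  ext x
  refine Complex.ext ?_ ?_
  · simpa [complexify_apply, mulVec, dotProduct] using congrFun hre x
  · simpa [complexify_apply, mulVec, dotProduct] using congrFun him x

theorem trace_realProjection_le [Fintype κ] (z : κ → ι → ℂ) :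
    (realProjection z).trace ≤ 2 * Fintype.card κ := by
  have hproj : LinearMap.IsProj (realPartSpan z)
      ((realPartSpan z).starProjection : EuclideanSpace ℝ ι →ₗ[ℝ] EuclideanSpace ℝ ι) :=
    ⟨Submodule.starProjection_apply_mem _, fun _ => Submodule.starProjection_eq_self_iff.mpr⟩
  have hfinrank : Module.finrank ℝ (realPartSpan z) ≤ Fintype.card (κ ⊕ κ) :=
    finrank_range_le_card _
  have htrace : (realProjection z).trace = Module.finrank ℝ (realPartSpan z) := by
    rw [← hproj.trace, ← trace_toLin_eq (realProjection z) (PiLp.basisFun 2 ℝ ι),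
      ← toLpLin_eq_toLin, ← coe_toEuclideanCLM_eq_toEuclideanLin, realProjection,
      StarAlgEquiv.apply_symm_apply]
  rw [htrace, two_mul]
  exact_mod_cast hfinrank.trans_eq Fintype.card_sum

end RealProjection

section Commutant

variable {ι R : Type*} [Fintype ι]

theorem isStarProjection_inv_smul_vecMulVec {u : ι → ℝ} (hu : u ≠ 0) :
    IsStarProjection ((u ⬝ᵥ u)⁻¹ • vecMulVec u u) where
  isIdempotentElem := by
    simp [IsIdempotentElem, vecMulVec_mul_vecMulVec, hu]
  isSelfAdjoint := by
    simp [IsSelfAdjoint, star_smul, star_eq_conjTranspose]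

variable [DecidableEq ι]

theorem vecMulVec_mem_of_forall_self_mem [Field R] [LinearOrder R] [IsStrictOrderedRing R]
    (A : Subalgebra R (Matrix ι ι R)) (V : Submodule R (ι → R)) (h : ∀ u ∈ V, vecMulVec u u ∈ A)
    {u v : ι → R} (hu : u ∈ V) (hv : v ∈ V) : vecMulVec u v ∈ A := by
  rcases eq_or_ne v 0 with rfl | hv₀
  · simp [A.zero_mem]
  have hsymm : vecMulVec u v + vecMulVec v u ∈ A := by
    have hpolar : vecMulVec u v + vecMulVec v u =
        vecMulVec (u + v) (u + v) - vecMulVec u u - vecMulVec v v := by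
      rw [add_vecMulVec, vecMulVec_add, vecMulVec_add]
      abel
    rw [hpolar]
    exact A.sub_mem (A.sub_mem (h _ (V.add_mem hu hv)) (h u hu)) (h v hv)
  have hmul : (v ⬝ᵥ v) • vecMulVec u v =
      (vecMulVec u v + vecMulVec v u) * vecMulVec v v - (u ⬝ᵥ v) • vecMulVec v v := by
    simp only [add_mul, vecMulVec_mul_vecMulVec, vecMulVec_smul]
    abel
  have hmem := A.sub_mem (A.mul_mem hsymm (h v hv)) (A.smul_mem (h v hv) (u ⬝ᵥ v))
  rw [← hmul] at hmem
  simpa [smul_smul, hv₀] using A.smul_mem hmem (v ⬝ᵥ v)⁻¹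

theorem mul_single_one_mul [CommRing R] (M N : Matrix ι ι R) (i j : ι) :
    M * single i j 1 * N = vecMulVec (M.col i) (N.row j) := by
  rw [single_eq_single_vecMulVec_single, mul_vecMulVec, vecMulVec_mul, mulVec_single_one,
    single_one_vecMul]

theorem trace_smul_mul_eq_of_commute_single [CommRing R] {K Q : Matrix ι ι R}
    (hQ : IsIdempotentElem Q) (h : ∀ i j, Commute K (Q * single i j 1 * Q)) :
    Q.trace • (K * Q) = (K * Q).trace • Q := by
  have hcomm : Commute K Q := by
    have hsum : Q = ∑ i, Q * single i i 1 * Q := by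
      rw [← Finset.sum_mul, ← Finset.mul_sum, sum_single_one, mul_one, hQ.eq]
    rw [hsum]
    exact .sum_right _ _ _ fun i _ => h i i
  have hentry (i j k l : ι) : (K * Q) k i * Q j l = Q k i * (K * Q) j l := by
    have h' : K * Q * single i j 1 * Q = Q * single i j 1 * (K * Q) := by
      simpa only [mul_assoc, ← hcomm.eq] using (h i j).eq
    rw [mul_single_one_mul, mul_single_one_mul] at h'
    exact congr_fun₂ h' k l
  ext k i
  simp only [Matrix.smul_apply, smul_eq_mul, trace, diag_apply, Finset.sum_mul]
  refine Finset.sum_congr rfl fun j _ => ?_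
  rw [mul_comm, hentry, mul_comm]

open scoped MatrixOrder in
theorem exists_mul_complexify_eq_smul {K : Matrix ι ι ℂ} (hK : 0 ≤ K) {q : Matrix ι ι ℝ}
    (hq : IsStarProjection q)
    (h : ∀ p, IsStarProjection p → q * p = p → Commute K (complexify p)) :
    ∃ a : ℝ, 0 ≤ a ∧ K * complexify q = a • complexify q := by
  let A : Subalgebra ℝ (Matrix ι ι ℝ) :=
    (Subalgebra.centralizer ℝ {K}).comap (complexify (ι := ι)).toAlgHom
  have hmem_A {M : Matrix ι ι ℝ} : M ∈ A ↔ Commute K (complexify M) := by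
    simp [A, Subalgebra.mem_centralizer_iff, commute_iff_eq]
  have hself (u : ι → ℝ) (hu : u ∈ q.mulVecLin.range) : vecMulVec u u ∈ A := by
    rcases eq_or_ne u 0 with rfl | hu₀
    · simp [A.zero_mem]
    have hqu : q *ᵥ u = u := by
      obtain ⟨w, rfl⟩ := hu
      simp [hq.isIdempotentElem.eq]
    have hmem := hmem_A.mpr <| h _ (isStarProjection_inv_smul_vecMulVec hu₀)
      (by rw [mul_smul_comm, mul_vecMulVec, hqu])
    simpa [smul_smul, hu₀] using A.smul_mem hmem (u ⬝ᵥ u)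
  have hQ : IsStarProjection (complexify q) := hq.map _
  have hcorner := trace_smul_mul_eq_of_commute_single hQ.isIdempotentElem (K := K) fun i j => by
    rw [← complexify_single_one, ← map_mul, ← map_mul, mul_single_one_mul, ← hmem_A]
    refine vecMulVec_mem_of_forall_self_mem A q.mulVecLin.range hself
      ⟨Pi.single i 1, mulVec_single_one q i⟩ ⟨Pi.single j 1, ?_⟩
    have hqT : qᵀ = q := hq.isSelfAdjoint
    rw [mulVecLin_apply, mulVec_single_one, ← col_transpose, hqT]
  rcases eq_or_ne (complexify q) 0 with hq₀ | hq₀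
  · exact ⟨0, le_rfl, by simp [hq₀]⟩
  have hQ_trace : (complexify q).trace ≠ 0 :=
    mt (nonneg_iff_posSemidef.mp hQ.nonneg).trace_eq_zero_iff.mp hq₀
  refine ⟨tracePairing K (complexify q) / tracePairing (complexify q) 1,
    div_nonneg (tracePairing_nonneg hK hQ.nonneg) (tracePairing_nonneg hQ.nonneg zero_le_one), ?_⟩
  rw [← Complex.coe_smul, Complex.ofReal_div, ofReal_tracePairing hK hQ.nonneg,
    ofReal_tracePairing hQ.nonneg zero_le_one, mul_one, div_eq_inv_mul, mul_smul, ← hcorner,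
    inv_smul_smul₀ hQ_trace]

end Commutant

section WeightedTwirl

open scoped MatrixOrder Matrix.Norms.L2Operator

variable {ι κ : Type*} [Fintype ι] [DecidableEq ι]

theorem orthConj_eq_self_iff (O : unitaryGroup ι ℝ) (M : Matrix ι ι ℂ) :
    orthConj O M = M ↔ Commute (complexify O.1) M := by
  have hO : complexify O.1 ∈ unitary (Matrix ι ι ℂ) := Unitary.map_mem complexify O.2
  rw [orthConj_apply, commute_iff_eq]
  constructor <;> intro h
  · conv_rhs => rw [← h, mul_assoc, Unitary.star_mul_self_of_mem hO, mul_one]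
  · rw [h, mul_assoc, Unitary.mul_star_self_of_mem hO, mul_one]

/-- The orthogonal reflection `2 p - 1` fixing the range of the real projection `p`. -/
def reflectionOfProjection {p : Matrix ι ι ℝ} (hp : IsStarProjection p) : unitaryGroup ι ℝ :=
  ⟨2 * p - 1, hp.two_mul_sub_one_mem_unitary⟩

theorem orthConj_reflectionOfProjection_eq_self_iff {p : Matrix ι ι ℝ} (hp : IsStarProjection p)
    (M : Matrix ι ι ℂ) :
    orthConj (reflectionOfProjection hp) M = M ↔ Commute (complexify p) M := by
  rw [orthConj_eq_self_iff, reflectionOfProjection, map_sub, map_one, two_mul, map_add,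
    ← two_smul ℂ]
  simp [commute_iff_eq, sub_mul, mul_sub]

/-- The average of the orthogonal conjugates of `ρ`, each weighted by `pairingProd X σ S`. -/
noncomputable def weightedTwirl (μ : Measure (unitaryGroup ι ℝ)) (X σ : κ → Matrix ι ι ℂ)
    (S : Finset κ) (ρ : Matrix ι ι ℂ) : Matrix ι ι ℂ :=
  ∫ O, pairingProd X σ S O • orthConj O ρ ∂μ

variable (μ : Measure (unitaryGroup ι ℝ)) {X σ : κ → Matrix ι ι ℂ} {S : Finset κ}
  {ρ : Matrix ι ι ℂ}

theorem weightedTwirl_nonneg (hX : ∀ i, 0 ≤ X i) (hσ : ∀ i, 0 ≤ σ i) (hρ : 0 ≤ ρ) :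
    0 ≤ weightedTwirl μ X σ S ρ :=
  integral_nonneg fun O => smul_nonneg (pairingProd_nonneg hX hσ O) (orthConj_nonneg O hρ)

variable [μ.IsHaarMeasure]

theorem integrable_pairingProd_smul_orthConj :
    Integrable (fun O => pairingProd X σ S O • orthConj O ρ) μ :=
  integrable_of_continuous_of_compactSpace μ
    ((continuous_pairingProd X σ S).smul (continuous_orthConj ρ))

theorem map_weightedTwirl {E : Type*} [NormedAddCommGroup E] [NormedSpace ℝ E] [CompleteSpace E]
    (f : Matrix ι ι ℂ →ₗ[ℝ] E) :
    f (weightedTwirl μ X σ S ρ) = ∫ O, pairingProd X σ S O • f (orthConj O ρ) ∂μ := by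
  simpa using! ((LinearMap.toContinuousLinearMap f).integral_comp_comm
    (integrable_pairingProd_smul_orthConj μ)).symm

theorem tracePairing_weightedTwirl (E : Matrix ι ι ℂ) :
    ⟪E, weightedTwirl μ X σ S ρ⟫ = ∫ O, ⟪E, orthConj O ρ⟫ * pairingProd X σ S O ∂μ := by
  simpa [mul_comm] using map_weightedTwirl μ (tracePairing E)

theorem orthConj_weightedTwirl {H : unitaryGroup ι ℝ} (hH : ∀ i ∈ S, orthConj H (X i) = X i) :
    orthConj H (weightedTwirl μ X σ S ρ) = weightedTwirl μ X σ S ρ := by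
  have hprod (O : unitaryGroup ι ℝ) : pairingProd X σ S (H * O) = pairingProd X σ S O := by
    refine Finset.prod_congr rfl fun i hi => ?_
    conv_lhs => rw [map_mul, ← hH i hi]
    exact tracePairing_orthConj H (X i) _
  have hmap := map_weightedTwirl μ (X := X) (σ := σ) (S := S) (ρ := ρ)
    ((orthConj H).toAlgEquiv.toLinearMap.restrictScalars ℝ)
  calc orthConj H (weightedTwirl μ X σ S ρ)
      = ∫ O, pairingProd X σ S (H * O) • orthConj (H * O) ρ ∂μ := by
        simpa [hprod] using! hmap
    _ = _ := integral_mul_left_eq_self (fun O => pairingProd X σ S O • orthConj O ρ) H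

theorem exists_weightedTwirl_mul_complexify_one_sub (hX : ∀ i, 0 ≤ X i) (hσ : ∀ i, 0 ≤ σ i)
    (hρ : 0 ≤ ρ) {r : Matrix ι ι ℝ} (hr : IsStarProjection r)
    (hrX : ∀ i ∈ S, complexify r * X i = X i) :
    ∃ a : ℝ, 0 ≤ a ∧
      weightedTwirl μ X σ S ρ * complexify (1 - r) = a • complexify (1 - r) := by
  refine exists_mul_complexify_eq_smul (weightedTwirl_nonneg μ hX hσ hρ) hr.one_sub
    fun p hp hpr => ?_
  refine ((orthConj_reflectionOfProjection_eq_self_iff hp _).mp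
    (orthConj_weightedTwirl μ fun i hi => ?_)).symm
  rw [orthConj_reflectionOfProjection_eq_self_iff]
  have hpr' : p * r = 0 := by
    have h := mul_eq_self_of_isSelfAdjoint hr.one_sub.isSelfAdjoint hp.isSelfAdjoint hpr
    simpa [mul_sub] using h
  have hpX : complexify p * X i = 0 := by
    rw [← hrX i hi, ← mul_assoc, ← map_mul, hpr', map_zero, zero_mul]
  have hXp : X i * complexify p = 0 := by
    have hp' : star (complexify p) = complexify p := by rw [← map_star, hp.isSelfAdjoint.star_eq]
    simpa [hp', (IsSelfAdjoint.of_nonneg (hX i)).star_eq] using congrArg star hpX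
  exact hpX.trans hXp.symm

end WeightedTwirl

section EffectDeviation

open scoped MatrixOrder

variable {ι T : Type*} [Fintype ι] [DecidableEq ι] [Fintype T] {K R : Matrix ι ι ℂ}

theorem tracePairing_one_one : ⟪(1 : Matrix ι ι ℂ), 1⟫ = Fintype.card ι := by
  simp [tracePairing_apply]

theorem tracePairing_one_conjugate (hR : IsStarProjection R) : ⟪1, R * K * R⟫ = ⟪R, K⟫ := by
  rw [tracePairing_apply, one_mul, trace_mul_cycle, hR.isIdempotentElem.eq, tracePairing_apply]

theorem eq_conjugate_add_smul_one_sub (hK : 0 ≤ K) (hR : IsStarProjection R) {a : ℝ}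
    (hKR : K * (1 - R) = a • (1 - R)) : K = R * K * R + a • (1 - R) := by
  have hRK : (1 - R) * K = a • (1 - R) := by
    simpa [hR.isSelfAdjoint.star_eq, (IsSelfAdjoint.of_nonneg hK).star_eq] using congrArg star hKR
  calc K = R * K * R + (1 - R) * K * R + K * (1 - R) := by noncomm_ring
    _ = _ := by
      rw [hRK, hKR, smul_mul_assoc, sub_mul, one_mul, hR.isIdempotentElem.eq, sub_self, smul_zero,
        add_zero]

theorem sum_abs_tracePairing_sub_le_add (hK : 0 ≤ K) {E : T → Matrix ι ι ℂ} (hE : ∀ t, 0 ≤ E t)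
    (hE_sum : ∑ t, E t = 1) (hR : IsStarProjection R) {a : ℝ} (ha : 0 ≤ a)
    (hKR : K * (1 - R) = a • (1 - R)) (b : ℝ) :
    ∑ t, |⟪E t, K⟫ - b * ⟪E t, 1⟫| ≤
      ⟪R, K⟫ + a * ⟪R, 1⟫ + |a - b| * Fintype.card ι := by
  have hterm (t : T) : |⟪E t, K⟫ - b * ⟪E t, 1⟫| ≤
      ⟪E t, R * K * R⟫ + a * ⟪E t, R⟫ + |a - b| * ⟪E t, 1⟫ := by
    have hdecomp : ⟪E t, K⟫ - b * ⟪E t, 1⟫ =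
        ⟪E t, R * K * R⟫ - a * ⟪E t, R⟫ + (a - b) * ⟪E t, 1⟫ := by
      conv_lhs => rw [eq_conjugate_add_smul_one_sub hK hR hKR]
      rw [map_add, map_smul, map_sub, smul_eq_mul]
      ring
    have hRKR := tracePairing_nonneg (hE t) (hR.isSelfAdjoint.conjugate_nonneg hK)
    have hER := mul_nonneg ha (tracePairing_nonneg (hE t) hR.nonneg)
    have hE₁ := tracePairing_nonneg (hE t) zero_le_one
    rw [hdecomp]
    refine (abs_add_le _ _).trans (add_le_add (abs_le.mpr ⟨?_, ?_⟩) ?_)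
    · linarith
    · linarith
    · rw [abs_mul, abs_of_nonneg hE₁]
  refine (Finset.sum_le_sum fun t _ => hterm t).trans_eq ?_
  simp only [Finset.sum_add_distrib, ← Finset.mul_sum, ← LinearMap.sum_apply, ← map_sum, hE_sum]
  rw [tracePairing_one_conjugate hR, tracePairing_comm 1 R, tracePairing_one_one]

theorem sum_abs_tracePairing_sub_le_two_mul [Nonempty ι] (hK : 0 ≤ K) {E : T → Matrix ι ι ℂ}
    (hE : ∀ t, 0 ≤ E t) (hE_sum : ∑ t, E t = 1) :
    ∑ t, |⟪E t, K⟫ - (Fintype.card ι : ℝ)⁻¹ * ⟪1, K⟫ * ⟪E t, 1⟫| ≤ 2 * ⟪1, K⟫ := by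
  have hterm (t : T) : |⟪E t, K⟫ - (Fintype.card ι : ℝ)⁻¹ * ⟪1, K⟫ * ⟪E t, 1⟫| ≤
      ⟪E t, K⟫ + (Fintype.card ι : ℝ)⁻¹ * ⟪1, K⟫ * ⟪E t, 1⟫ := by
    have hEK := tracePairing_nonneg (hE t) hK
    have hE₁ := tracePairing_nonneg (hE t) zero_le_one
    have hK₁ := tracePairing_nonneg (zero_le_one' (Matrix ι ι ℂ)) hK
    have hprod : 0 ≤ (Fintype.card ι : ℝ)⁻¹ * ⟪1, K⟫ * ⟪E t, 1⟫ := by positivity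
    exact abs_le.mpr ⟨by linarith, by linarith⟩
  refine (Finset.sum_le_sum fun t _ => hterm t).trans_eq ?_
  simp only [Finset.sum_add_distrib, ← Finset.mul_sum, ← LinearMap.sum_apply, ← map_sum, hE_sum,
    tracePairing_one_one]
  field_simp
  ring

theorem sum_abs_tracePairing_sub_le [Nonempty ι] (hK : 0 ≤ K) {E : T → Matrix ι ι ℂ}
    (hE : ∀ t, 0 ≤ E t) (hE_sum : ∑ t, E t = 1) (hR : IsStarProjection R) {a : ℝ} (ha : 0 ≤ a)
    (hKR : K * (1 - R) = a • (1 - R)) :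
    ∑ t, |⟪E t, K⟫ - (Fintype.card ι : ℝ)⁻¹ * ⟪1, K⟫ * ⟪E t, 1⟫| ≤
      2 * ⟪R, K⟫ + 4 * ⟪R, 1⟫ * ⟪1, K⟫ / Fintype.card ι := by
  have hD : (0 : ℝ) < Fintype.card ι := by exact_mod_cast Fintype.card_pos
  have hRK := tracePairing_nonneg hR.nonneg hK
  have hK₁ := tracePairing_nonneg (zero_le_one' (Matrix ι ι ℂ)) hK
  have haR : 0 ≤ a * ⟪R, 1⟫ := mul_nonneg ha (tracePairing_nonneg hR.nonneg zero_le_one)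
  rcases le_total (2 * ⟪R, 1⟫) (Fintype.card ι) with hsmall | hlarge
  · have htrace : ⟪1, K⟫ = ⟪R, K⟫ + a * (Fintype.card ι - ⟪R, 1⟫) := by
      conv_lhs => rw [eq_conjugate_add_smul_one_sub hK hR hKR]
      rw [map_add, map_smul, map_sub, tracePairing_one_conjugate hR, tracePairing_one_one,
        tracePairing_comm 1 R, smul_eq_mul]
    have hdiff : |a - (Fintype.card ι : ℝ)⁻¹ * ⟪1, K⟫| * Fintype.card ι ≤
        ⟪R, K⟫ + a * ⟪R, 1⟫ := by
      have hmul : (a - (Fintype.card ι : ℝ)⁻¹ * ⟪1, K⟫) * Fintype.card ι =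
          a * ⟪R, 1⟫ - ⟪R, K⟫ := by
        rw [htrace]
        field_simp
        ring
      rw [← abs_of_pos hD, ← abs_mul, abs_of_pos hD, hmul]
      exact abs_le.mpr ⟨by linarith, by linarith⟩
    have haR_le : a * ⟪R, 1⟫ ≤ 2 * ⟪R, 1⟫ * ⟪1, K⟫ / Fintype.card ι := by
      rw [le_div_iff₀ hD]
      have ha_le : a * Fintype.card ι ≤ 2 * ⟪1, K⟫ := by nlinarith
      linarith [mul_le_mul_of_nonneg_left ha_le (tracePairing_nonneg hR.nonneg zero_le_one)]
    calc _ ≤ _ := sum_abs_tracePairing_sub_le_add hK hE hE_sum hR ha hKR _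
      _ ≤ 2 * ⟪R, K⟫ + 2 * (2 * ⟪R, 1⟫ * ⟪1, K⟫ / Fintype.card ι) := by linarith
      _ = _ := by ring
  · refine (sum_abs_tracePairing_sub_le_two_mul hK hE hE_sum).trans ?_
    have hK_le : 2 * ⟪1, K⟫ ≤ 4 * ⟪R, 1⟫ * ⟪1, K⟫ / Fintype.card ι := by
      rw [le_div_iff₀ hD]
      nlinarith
    linarith

theorem sum_abs_integral_tracePairing_mul_pairingProd_sub_le {κ : Type*} [Nonempty ι]
    (μ : Measure (unitaryGroup ι ℝ)) [μ.IsHaarMeasure] {X σ : κ → Matrix ι ι ℂ} {S : Finset κ}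
    (hX : ∀ i, 0 ≤ X i) (hσ : ∀ i, 0 ≤ σ i) {ρ : Matrix ι ι ℂ} (hρ : 0 ≤ ρ)
    (hρ_trace : ρ.trace = 1) {r : Matrix ι ι ℝ} (hr : IsStarProjection r)
    (hrX : ∀ i ∈ S, complexify r * X i = X i) {E : T → Matrix ι ι ℂ} (hE : ∀ t, 0 ≤ E t)
    (hE_sum : ∑ t, E t = 1) :
    ∑ t, |∫ O, ⟪E t, orthConj O ρ⟫ * pairingProd X σ S O ∂μ -
        (Fintype.card ι : ℝ)⁻¹ * (∫ O, pairingProd X σ S O ∂μ) * ⟪E t, 1⟫| ≤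
      2 * ∫ O, ⟪complexify r, orthConj O ρ⟫ * pairingProd X σ S O ∂μ +
        4 * ⟪complexify r, 1⟫ * (∫ O, pairingProd X σ S O ∂μ) / Fintype.card ι := by
  obtain ⟨a, ha, hKr⟩ := exists_weightedTwirl_mul_complexify_one_sub μ hX hσ hρ hr hrX
  rw [map_sub, map_one] at hKr
  have hK_trace : ⟪1, weightedTwirl μ X σ S ρ⟫ = ∫ O, pairingProd X σ S O ∂μ := by
    rw [tracePairing_weightedTwirl]
    simp [tracePairing_apply, hρ_trace]
  simpa only [hK_trace, tracePairing_weightedTwirl] using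
    sum_abs_tracePairing_sub_le (weightedTwirl_nonneg μ hX hσ hρ) hE hE_sum (hr.map _) ha hKr

end EffectDeviation

section Marginalization

variable {κ T : Type*}

theorem apply_update_of_dependsOn [DecidableEq κ] {β : Type*} {f : (κ → T) → β} {I : Set κ}
    (hf : DependsOn f I) {i : κ} (hi : i ∉ I) (s : κ → T) (t : T) :
    f (Function.update s i t) = f s :=
  hf fun _ hj => Function.update_of_ne (ne_of_mem_of_not_mem hj hi) t s

theorem dependsOn_prod_Iio [Preorder κ] {R : Type*} [CommMonoid R] {q : κ → (κ → T) → R}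
    (hq : ∀ i, DependsOn (q i) (Set.Iic i)) {j : κ} {B : Finset κ} (hB : ∀ i ∈ B, i < j) :
    DependsOn (fun s => ∏ i ∈ B, q i s) (Set.Iio j) :=
  fun _ _ h => Finset.prod_congr rfl fun i hi => hq i fun _ hi' => h _ (hi'.trans_lt (hB i hi))

variable [Fintype κ] [Fintype T]

theorem sum_sum_update [DecidableEq κ] {M : Type*} [AddCommMonoid M] (f : (κ → T) → M) (i : κ) :
    ∑ s, ∑ t, f (Function.update s i t) = Fintype.card T • ∑ s, f s := by
  have hswap : Function.Involutive fun x : (κ → T) × T => (Function.update x.1 i x.2, x.1 i) :=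
    fun x => by simp
  rw [← Fintype.sum_prod_type' fun s t => f (Function.update s i t)]
  refine (Equiv.sum_comp hswap.toPerm fun x => f x.1).trans ?_
  simp [Fintype.sum_prod_type, Finset.sum_nsmul]

variable [LinearOrder κ]

theorem card_pow_mul_sum_mul_prod {R : Type*} [CommSemiring R] {q : κ → (κ → T) → R}
    (hq : ∀ i, DependsOn (q i) (Set.Iic i))
    (hq_sum : ∀ i s, ∑ t, q i (Function.update s i t) = 1) {f : (κ → T) → R} {B : Finset κ}
    (hf : ∀ b ∈ B, DependsOn f (Set.Iio b)) :
    (Fintype.card T : R) ^ B.card * ∑ s, f s * ∏ i ∈ B, q i s = ∑ s, f s := by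
  induction B using Finset.induction_on_max with
  | empty => simp
  | insert b B hb ih =>
    have hb_notMem : b ∉ B := fun h => (hb b h).false
    rw [Finset.card_insert_of_notMem hb_notMem, pow_succ, mul_assoc, ← nsmul_eq_mul,
      ← sum_sum_update _ b, ← ih fun i hi => hf i (Finset.mem_insert_of_mem hi)]
    congr! 2 with s
    have hrest (t : T) :
        f (Function.update s b t) * ∏ i ∈ insert b B, q i (Function.update s b t) =
          f s * (∏ i ∈ B, q i s) * q b (Function.update s b t) := by
      rw [Finset.prod_insert hb_notMem, apply_update_of_dependsOn (hf b (B.mem_insert_self b))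
        Set.self_notMem_Iio, Finset.prod_congr rfl fun i hi =>
          apply_update_of_dependsOn (hq i) (not_le_of_gt (hb i hi)) s t]
      ring
    simp only [hrest, ← Finset.mul_sum, hq_sum, mul_one]

theorem sum_prod_eq_one [Nonempty T] {q : κ → (κ → T) → ℝ}
    (hq : ∀ i, DependsOn (q i) (Set.Iic i))
    (hq_sum : ∀ i s, ∑ t, q i (Function.update s i t) = 1) : ∑ s, ∏ i, q i s = 1 := by
  have h := card_pow_mul_sum_mul_prod hq hq_sum (f := 1) (B := Finset.univ)
    fun b _ => (dependsOn_const 1).mono (Set.empty_subset _)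
  simpa using h

theorem sum_mul_prod_le_sum_mul_prod_insert [Nonempty T] {q : κ → (κ → T) → ℝ}
    (hq : ∀ i, DependsOn (q i) (Set.Iic i))
    (hq_sum : ∀ i s, ∑ t, q i (Function.update s i t) = 1) (hq_nonneg : ∀ i s, 0 ≤ q i s)
    {j : κ} {f g : (κ → T) → ℝ} (hf : DependsOn f (Set.Iic j)) (hg : DependsOn g (Set.Iio j))
    (hfg : ∀ s, ∑ t, f (Function.update s j t) ≤ g s) {B : Finset κ} (hj : j ∉ B) :
    ∑ s, f s * ∏ i ∈ B, q i s ≤ ∑ s, g s * ∏ i ∈ insert j B, q i s := by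
  let past : (κ → T) → ℝ := fun s => ∏ i ∈ B with i < j, q i s
  let later : Finset κ := {i ∈ B | j < i}
  have hpast : DependsOn past (Set.Iio j) :=
    dependsOn_prod_Iio hq fun i hi => (Finset.mem_filter.mp hi).2
  have hsplit (s : κ → T) : ∏ i ∈ B, q i s = past s * ∏ i ∈ later, q i s := by
    rw [← Finset.prod_filter_mul_prod_filter_not B (· < j)]
    congr 2
    refine Finset.filter_congr fun i hi => ?_
    rw [not_lt, (ne_of_mem_of_not_mem hi hj).symm.le_iff_lt]
  have hj_later : j ∉ later := by simp [later]
  have hlater {b : κ} (hb : b ∈ later) : j < b := (Finset.mem_filter.mp hb).2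
  have hf_sum := card_pow_mul_sum_mul_prod hq hq_sum (f := fun s => f s * past s) (B := later)
    fun b hb s s' h => congr_arg₂ _ (hf fun i hi => h i (hi.trans_lt (hlater hb)))
      (hpast fun i hi => h i (hi.trans (hlater hb)))
  have hg_sum := card_pow_mul_sum_mul_prod hq hq_sum (f := fun s => g s * past s)
    (B := insert j later) fun b hb s s' h => by
      have hjb : j ≤ b := (Finset.mem_insert.mp hb).elim (fun h => h.ge) fun h => (hlater h).le
      exact congr_arg₂ _ (hg fun i hi => h i (hi.trans_le hjb))
        (hpast fun i hi => h i (hi.trans_le hjb))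
  have hcard : (0 : ℝ) < Fintype.card T := by exact_mod_cast Fintype.card_pos
  refine le_of_mul_le_mul_left ?_ (pow_pos hcard (insert j later).card)
  calc (Fintype.card T : ℝ) ^ (insert j later).card * ∑ s, f s * ∏ i ∈ B, q i s
      = Fintype.card T • ∑ s, f s * past s := by
        rw [Finset.card_insert_of_notMem hj_later, pow_succ', mul_assoc, nsmul_eq_mul, ← hf_sum]
        simp only [hsplit, mul_assoc]
    _ = ∑ s, (∑ t, f (Function.update s j t)) * past s := by
        rw [← sum_sum_update _ j]
        simp only [apply_update_of_dependsOn hpast Set.self_notMem_Iio, Finset.sum_mul]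
    _ ≤ ∑ s, g s * past s := by
        gcongr with s
        · exact Finset.prod_nonneg fun i _ => hq_nonneg i s
        · exact hfg s
    _ = _ := by
        rw [← hg_sum]
        simp only [Finset.prod_insert hj, Finset.prod_insert hj_later, hsplit, mul_assoc,
          mul_left_comm]

end Marginalization

section AdaptiveMeasurement

open scoped MatrixOrder

/-- A sequence of measurements on `ℂ^ι` with weighted rank-one effects, one for each `i : κ`, chosen
adaptively: the state measured in step `i` depends on the outcomes of the earlier steps, and the
unit vector and the weight read off in step `i` also on its own outcome `s i`. -/
structure AdaptiveMeasurement (ι κ T : Type*) [Fintype ι] [DecidableEq ι] [LinearOrder κ]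
    [Fintype T] where
  vector : κ → (κ → T) → ι → ℂ
  weight : κ → (κ → T) → ℝ
  state : κ → (κ → T) → Matrix ι ι ℂ
  sum_norm_sq_vector (i : κ) (s : κ → T) : ∑ x, ‖vector i s x‖ ^ 2 = 1
  weight_nonneg (i : κ) (s : κ → T) : 0 ≤ weight i s
  dependsOn_vector (i : κ) : DependsOn (vector i) (Set.Iic i)
  dependsOn_weight (i : κ) : DependsOn (weight i) (Set.Iic i)
  sum_weight_smul (i : κ) (s : κ → T) : ∑ t, (weight i (Function.update s i t) : ℂ) •
    vecMulVec (vector i (Function.update s i t)) (star (vector i (Function.update s i t))) = 1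
  posSemidef_state (i : κ) (s : κ → T) : (state i s).PosSemidef
  trace_state (i : κ) (s : κ → T) : (state i s).trace = 1
  dependsOn_state (i : κ) : DependsOn (state i) (Set.Iio i)

namespace AdaptiveMeasurement

variable {ι κ T : Type*} [Fintype ι] [DecidableEq ι] [LinearOrder κ] [Fintype T]
  (M : AdaptiveMeasurement ι κ T)

/-- The effect (POVM element) of the outcome `s i` of step `i`. -/
noncomputable def effect (i : κ) (s : κ → T) : Matrix ι ι ℂ :=
  M.weight i s • vecMulVec (M.vector i s) (star (M.vector i s))

theorem effect_nonneg (i : κ) (s : κ → T) : 0 ≤ M.effect i s :=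
  smul_nonneg (M.weight_nonneg i s) (posSemidef_vecMulVec_self_star _).nonneg

theorem dependsOn_effect (i : κ) : DependsOn (M.effect i) (Set.Iic i) :=
  fun _ _ h => by rw [effect, effect, M.dependsOn_vector i h, M.dependsOn_weight i h]

theorem sum_effect (i : κ) (s : κ → T) : ∑ t, M.effect i (Function.update s i t) = 1 :=
  M.sum_weight_smul i s

theorem tracePairing_effect_one (i : κ) (s : κ → T) : ⟪M.effect i s, 1⟫ = M.weight i s := by
  have hunit : M.vector i s ⬝ᵥ star (M.vector i s) = 1 := by
    simp only [dotProduct, Pi.star_apply, Complex.star_def, Complex.mul_conj', ← Complex.ofReal_pow,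
      ← Complex.ofReal_sum, M.sum_norm_sq_vector, Complex.ofReal_one]
  rw [effect, map_smul, LinearMap.smul_apply, tracePairing_apply, mul_one, trace_vecMulVec, hunit,
    Complex.one_re, smul_eq_mul, mul_one]

theorem state_nonneg (i : κ) (s : κ → T) : 0 ≤ M.state i s :=
  (M.posSemidef_state i s).nonneg

/-- The conditional probability of the outcome `s i` when the maximally mixed state is measured in
step `i`. -/
noncomputable def uniformProb (i : κ) (s : κ → T) : ℝ :=
  (Fintype.card ι : ℝ)⁻¹ * M.weight i s

theorem uniformProb_nonneg (i : κ) (s : κ → T) : 0 ≤ M.uniformProb i s :=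
  mul_nonneg (by positivity) (M.weight_nonneg i s)

theorem dependsOn_uniformProb (i : κ) : DependsOn (M.uniformProb i) (Set.Iic i) :=
  fun _ _ h => by rw [uniformProb, uniformProb, M.dependsOn_weight i h]

theorem sum_tracePairing_effect (i : κ) (s : κ → T) (ρ : Matrix ι ι ℂ) :
    ∑ t, ⟪M.effect i (Function.update s i t), ρ⟫ = ρ.trace.re := by
  rw [← LinearMap.sum_apply, ← map_sum, sum_effect, tracePairing_apply, one_mul]

theorem sum_uniformProb [Nonempty ι] (i : κ) (s : κ → T) :
    ∑ t, M.uniformProb i (Function.update s i t) = 1 := by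
  simp only [uniformProb, ← Finset.mul_sum, ← tracePairing_effect_one, sum_tracePairing_effect]
  simp

/-- The product over the steps in `A` of the conditional probabilities of the outcomes `s` when
the states are conjugated by `O`. -/
noncomputable def rotatedProb (A : Finset κ) (s : κ → T) : unitaryGroup ι ℝ → ℝ :=
  pairingProd (M.effect · s) (M.state · s) A

theorem continuous_rotatedProb (A : Finset κ) (s : κ → T) : Continuous (M.rotatedProb A s) :=
  continuous_pairingProd _ _ A

theorem rotatedProb_nonneg (A : Finset κ) (s : κ → T) (O : unitaryGroup ι ℝ) :
    0 ≤ M.rotatedProb A s O :=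
  pairingProd_nonneg (M.effect_nonneg · s) (M.state_nonneg · s) O

theorem rotatedProb_insert {A : Finset κ} {j : κ} (hj : j ∉ A) (s : κ → T)
    (O : unitaryGroup ι ℝ) : M.rotatedProb (insert j A) s O =
      ⟪M.effect j s, orthConj O (M.state j s)⟫ * M.rotatedProb A s O :=
  Finset.prod_insert hj

theorem dependsOn_rotatedProb {A : Finset κ} {j : κ} (hA : ∀ i ∈ A, i < j) :
    DependsOn (M.rotatedProb A) (Set.Iio j) := by
  refine fun s s' h => funext fun O => Finset.prod_congr rfl fun i hi => ?_
  simp only [M.dependsOn_effect i fun l hl => h l (hl.trans_lt (hA i hi)),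
    M.dependsOn_state i fun l hl => h l (hl.trans (hA i hi))]

/-- The orthogonal projection onto the span of the real and imaginary parts of the vectors read off
in the steps in `A`. -/
noncomputable def historyProjection (A : Finset κ) (s : κ → T) : Matrix ι ι ℝ :=
  realProjection fun i : A => M.vector i s

theorem historyProjection_mul_effect {A : Finset κ} {i : κ} (hi : i ∈ A) (s : κ → T) :
    complexify (M.historyProjection A s) * M.effect i s = M.effect i s := by
  rw [effect, mul_smul_comm, mul_vecMulVec]
  congr 2
  exact complexify_realProjection_mulVec (fun i : A => M.vector i s) ⟨i, hi⟩

theorem tracePairing_historyProjection_one_le (A : Finset κ) (s : κ → T) :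
    ⟪complexify (M.historyProjection A s), 1⟫ ≤ 2 * A.card := by
  have h := trace_realProjection_le fun i : A => M.vector i s
  rw [Fintype.card_coe] at h
  simpa [tracePairing_apply, complexify_apply, trace, historyProjection] using h

theorem dependsOn_historyProjection {A : Finset κ} {j : κ} (hA : ∀ i ∈ A, i < j) :
    DependsOn (M.historyProjection A) (Set.Iio j) := fun _ _ h =>
  congrArg realProjection <| funext fun i =>
    M.dependsOn_vector i fun l hl => h l (hl.trans_lt (hA i i.2))

theorem ofReal_rotatedProb (A : Finset κ) (s : κ → T) (O : unitaryGroup ι ℝ) :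
    (M.rotatedProb A s O : ℂ) = ∏ i ∈ A, star (M.vector i s) ⬝ᵥ
      ((O.1.map Complex.ofReal * M.state i s * (O.1.map Complex.ofReal)ᵀ) *ᵥ M.vector i s) *
        (M.weight i s : ℂ) := by
  rw [rotatedProb, pairingProd, Complex.ofReal_prod]
  refine Finset.prod_congr rfl fun i _ => ?_
  rw [ofReal_tracePairing (M.effect_nonneg i s) (orthConj_nonneg O (M.state_nonneg i s)),
    orthConj_eq_mul_mul_transpose, effect, smul_mul_assoc, trace_smul, vecMulVec_mul,
    trace_vecMulVec, dotProduct_comm, ← dotProduct_mulVec, Complex.real_smul, mul_comm]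

variable [Fintype κ] (μ : Measure (unitaryGroup ι ℝ))

/-- The probability of the outcomes `s` when the states measured in the steps in `A` are conjugated
by the same `μ`-random orthogonal matrix and all the others are maximally mixed. -/
noncomputable def hybridProb (A : Finset κ) (s : κ → T) : ℝ :=
  (∫ O, M.rotatedProb A s O ∂μ) * ∏ i ∈ Aᶜ, M.uniformProb i s

theorem hybridProb_nonneg (A : Finset κ) (s : κ → T) : 0 ≤ M.hybridProb μ A s :=
  mul_nonneg (integral_nonneg (M.rotatedProb_nonneg A s))
    (Finset.prod_nonneg fun i _ => M.uniformProb_nonneg i s)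

theorem sum_rotatedProb_mul_prod_uniformProb [Nonempty ι] [Nonempty T] (A : Finset κ)
    (O : unitaryGroup ι ℝ) : ∑ s, M.rotatedProb A s O * ∏ i ∈ Aᶜ, M.uniformProb i s = 1 := by
  let prob (i : κ) (s : κ → T) : ℝ :=
    if i ∈ A then ⟪M.effect i s, orthConj O (M.state i s)⟫ else M.uniformProb i s
  have hprod (s : κ → T) :
      M.rotatedProb A s O * ∏ i ∈ Aᶜ, M.uniformProb i s = ∏ i, prob i s := by
    rw [← Finset.prod_mul_prod_compl A]
    congr 1 <;> refine Finset.prod_congr rfl fun i hi => ?_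
    · exact (if_pos hi).symm
    · exact (if_neg (Finset.mem_compl.mp hi)).symm
  simp only [hprod]
  refine sum_prod_eq_one (fun i s s' h => ?_) fun i s => ?_
  · simp only [prob, M.dependsOn_effect i h, M.dependsOn_uniformProb i h,
      M.dependsOn_state i fun l hl => h l hl.le]
  · by_cases hi : i ∈ A
    · simp only [prob, if_pos hi, apply_update_of_dependsOn (M.dependsOn_state i)
        Set.self_notMem_Iio, sum_tracePairing_effect, trace_orthConj, M.trace_state, Complex.one_re]
    · simp only [prob, if_neg hi, sum_uniformProb]

theorem sum_hybridProb [Nonempty ι] [Nonempty T] [IsProbabilityMeasure μ] (A : Finset κ) :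
    ∑ s, M.hybridProb μ A s = 1 := by
  simp only [hybridProb, ← integral_mul_const]
  rw [← integral_finsetSum _ fun s _ =>
    (integrable_of_continuous_of_compactSpace μ (M.continuous_rotatedProb A s)).mul_const _]
  simp [sum_rotatedProb_mul_prod_uniformProb]

/-- The probability that the rotated state of step `j` passes a test for the span of the vectors
read off in the steps in `A₀`, when the outcomes have the distribution `hybridProb μ A`. -/
noncomputable def historyOverlap (j : κ) (A₀ A : Finset κ) : ℝ :=
  ∑ s, (∫ O, ⟪complexify (M.historyProjection A₀ s), orthConj O (M.state j s)⟫ *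
    M.rotatedProb A s O ∂μ) * ∏ i ∈ Aᶜ, M.uniformProb i s

theorem abs_hybridProb_insert_sub {j : κ} {A : Finset κ} (hj : j ∉ A) (s : κ → T) :
    |M.hybridProb μ (insert j A) s - M.hybridProb μ A s| =
      |(∫ O, ⟪M.effect j s, orthConj O (M.state j s)⟫ * M.rotatedProb A s O ∂μ) -
        (Fintype.card ι : ℝ)⁻¹ * (∫ O, M.rotatedProb A s O ∂μ) * ⟪M.effect j s, 1⟫| *
      ∏ i ∈ (insert j A)ᶜ, M.uniformProb i s := by
  have hprod := Finset.prod_nonneg fun i (_ : i ∈ (insert j A)ᶜ) => M.uniformProb_nonneg i s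
  rw [hybridProb, hybridProb, ← Finset.insert_compl_insert hj, Finset.prod_insert (by simp),
    ← mul_assoc, ← sub_mul, abs_mul, abs_of_nonneg hprod, uniformProb,
    M.tracePairing_effect_one]
  simp only [M.rotatedProb_insert hj]
  congr 3
  ring

variable [Nonempty ι] [Nonempty T] [μ.IsHaarMeasure]

theorem sum_abs_hybridProb_insert_sub_le_sum {j : κ} {A : Finset κ} (hA : ∀ i ∈ A, i < j) :
    ∑ s, |M.hybridProb μ (insert j A) s - M.hybridProb μ A s| ≤
      ∑ s, (2 * ∫ O, ⟪complexify (M.historyProjection A s), orthConj O (M.state j s)⟫ *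
          M.rotatedProb A s O ∂μ +
        4 * ⟪complexify (M.historyProjection A s), 1⟫ * (∫ O, M.rotatedProb A s O ∂μ) /
          Fintype.card ι) * ∏ i ∈ Aᶜ, M.uniformProb i s := by
  have hj : j ∉ A := fun h => (hA j h).false
  have hrot := M.dependsOn_rotatedProb hA
  simp only [M.abs_hybridProb_insert_sub μ hj]
  rw [← Finset.insert_compl_insert hj]
  refine sum_mul_prod_le_sum_mul_prod_insert M.dependsOn_uniformProb M.sum_uniformProb
    M.uniformProb_nonneg (fun s s' h => ?_) (fun s s' h => ?_) (fun s => ?_) (by simp)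
  · have hlt : ∀ i ∈ Set.Iio j, s i = s' i := fun i hi => h i (le_of_lt hi)
    simp only [M.dependsOn_effect j h, M.dependsOn_state j hlt, hrot hlt]
  · simp only [M.dependsOn_historyProjection hA h, M.dependsOn_state j h, hrot h]
  · simp only [apply_update_of_dependsOn hrot Set.self_notMem_Iio,
      apply_update_of_dependsOn (M.dependsOn_state j) Set.self_notMem_Iio]
    exact sum_abs_integral_tracePairing_mul_pairingProd_sub_le μ (M.effect_nonneg · s)
      (M.state_nonneg · s) (M.state_nonneg j s) (M.trace_state j s)
      (isStarProjection_realProjection _) (fun i hi => M.historyProjection_mul_effect hi s)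
      (fun t => M.effect_nonneg j _) (M.sum_effect j s)

variable [IsProbabilityMeasure μ]

theorem card_mul_historyOverlap_le_sum (j : κ) {A₀ A : Finset κ} (hA : A ⊆ A₀) {c : ℝ}
    (hc : 0 < c) : Fintype.card ι * M.historyOverlap μ j A₀ A ≤
      2 * A₀.card +
        ∑ i ∈ A, (c + c⁻¹ * (Fintype.card ι * M.historyOverlap μ j A₀ (A.erase i))) := by
  let overlap (B : Finset κ) (s : κ → T) : ℝ :=
    ∫ O, ⟪complexify (M.historyProjection A₀ s), orthConj O (M.state j s)⟫ * M.rotatedProb B s O ∂μ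
  have hpoint (s : κ → T) :
      Fintype.card ι * (overlap A s * ∏ i ∈ Aᶜ, M.uniformProb i s) ≤
        2 * A₀.card * M.hybridProb μ A s + ∑ i ∈ A, (c * M.hybridProb μ A s + c⁻¹ *
          (Fintype.card ι * (overlap (A.erase i) s * ∏ l ∈ (A.erase i)ᶜ, M.uniformProb l s))) := by
    have hproj : IsStarProjection (M.historyProjection A₀ s) := isStarProjection_realProjection _
    have h := card_mul_integral_tracePairing_mul_pairingProd_le μ (hproj.map complexify)
      (transpose_complexify_realProjection _) (M.state_nonneg j s) (M.trace_state j s)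
      (M.effect_nonneg · s) (M.state_nonneg · s) (M.trace_state · s)
      (fun i hi => M.historyProjection_mul_effect (hA hi) s) hc
    have hq : 0 ≤ ∏ i ∈ Aᶜ, M.uniformProb i s :=
      Finset.prod_nonneg fun i _ => M.uniformProb_nonneg i s
    rw [← mul_assoc]
    refine (mul_le_mul_of_nonneg_right h hq).trans ?_
    rw [add_mul, mul_assoc, Finset.sum_mul]
    refine add_le_add (mul_le_mul_of_nonneg_right (M.tracePairing_historyProjection_one_le A₀ s)
      (M.hybridProb_nonneg μ A s)) (Finset.sum_le_sum fun i hi => Eq.le ?_)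
    rw [Finset.compl_erase, Finset.prod_insert (by simpa using hi), M.tracePairing_effect_one,
      uniformProb]
    simp only [hybridProb, rotatedProb, overlap]
    field_simp
  calc Fintype.card ι * M.historyOverlap μ j A₀ A
      = ∑ s, Fintype.card ι * (overlap A s * ∏ i ∈ Aᶜ, M.uniformProb i s) := Finset.mul_sum _ _ _
    _ ≤ _ := Finset.sum_le_sum fun s _ => hpoint s
    _ = _ := by
      rw [Finset.sum_add_distrib, Finset.sum_comm]
      simp only [Finset.sum_add_distrib, ← Finset.mul_sum, sum_hybridProb, mul_one]
      rfl

theorem card_mul_historyOverlap_le (j : κ) {A₀ A : Finset κ} (hA : A ⊆ A₀) :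
    Fintype.card ι * M.historyOverlap μ j A₀ A ≤ 4 * (A₀.card + 1 : ℝ) ^ 2 := by
  induction A using Finset.strongInduction with
  | H A ih =>
    have hcard : (A.card : ℝ) ≤ A₀.card := by exact_mod_cast Finset.card_le_card hA
    have hc : (0 : ℝ) < 2 * (A₀.card + 1) := by positivity
    calc _ ≤ _ := M.card_mul_historyOverlap_le_sum μ j hA hc
      _ ≤ 2 * (A₀.card : ℝ) + ∑ i ∈ A, (2 * (A₀.card + 1 : ℝ) +
            (2 * (A₀.card + 1 : ℝ))⁻¹ * (4 * (A₀.card + 1 : ℝ) ^ 2)) := by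
        gcongr 2 * (A₀.card : ℝ) + ∑ i ∈ A, (_ + _ * ?_) with i hi
        exact ih _ (Finset.erase_ssubset hi) ((Finset.erase_subset i A).trans hA)
      _ = 2 * (A₀.card : ℝ) + A.card * (4 * (A₀.card + 1)) := by
        rw [Finset.sum_const, nsmul_eq_mul]
        field_simp
        ring
      _ ≤ _ := by nlinarith

theorem sum_abs_hybridProb_insert_sub_le {j : κ} {A : Finset κ} (hA : ∀ i ∈ A, i < j) :
    ∑ s, |M.hybridProb μ (insert j A) s - M.hybridProb μ A s| ≤
      10 * (A.card + 1 : ℝ) ^ 2 / Fintype.card ι := by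
  have hD : (0 : ℝ) < Fintype.card ι := by exact_mod_cast Fintype.card_pos
  have htrace : ∑ s, ⟪complexify (M.historyProjection A s), 1⟫ * M.hybridProb μ A s ≤
      2 * A.card := by
    calc _ ≤ ∑ s, 2 * A.card * M.hybridProb μ A s := Finset.sum_le_sum fun s _ =>
          mul_le_mul_of_nonneg_right (M.tracePairing_historyProjection_one_le A s)
            (M.hybridProb_nonneg μ A s)
      _ = _ := by rw [← Finset.mul_sum, sum_hybridProb, mul_one]
  have hoverlap := M.card_mul_historyOverlap_le μ j (subset_refl A)
  calc _ ≤ _ := M.sum_abs_hybridProb_insert_sub_le_sum μ hA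
    _ = 2 * M.historyOverlap μ j A A + 4 / Fintype.card ι *
          ∑ s, ⟪complexify (M.historyProjection A s), 1⟫ * M.hybridProb μ A s := by
        rw [historyOverlap, Finset.mul_sum, Finset.mul_sum, ← Finset.sum_add_distrib]
        refine Finset.sum_congr rfl fun s _ => ?_
        rw [hybridProb]
        ring
    _ ≤ 2 * (4 * (A.card + 1 : ℝ) ^ 2 / Fintype.card ι) + 4 / Fintype.card ι * (2 * A.card) := by
        gcongr
        exact (le_div_iff₀' hD).mpr hoverlap
    _ = (8 * (A.card + 1 : ℝ) ^ 2 + 8 * A.card) / Fintype.card ι := by ring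
    _ ≤ _ := by
        gcongr
        nlinarith [sq_nonneg (A.card - 1 : ℝ)]

theorem sum_abs_hybridProb_sub_hybridProb_empty_le (A : Finset κ) :
    ∑ s, |M.hybridProb μ A s - M.hybridProb μ ∅ s| ≤
      10 * (A.card : ℝ) ^ 3 / Fintype.card ι := by
  induction A using Finset.induction_on_max with
  | empty => simp
  | insert j A hA ih =>
    have hcard : ((insert j A).card : ℝ) = A.card + 1 := by
      exact_mod_cast Finset.card_insert_of_notMem fun h => (hA j h).false
    calc ∑ s, |M.hybridProb μ (insert j A) s - M.hybridProb μ ∅ s|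
        ≤ ∑ s, |M.hybridProb μ (insert j A) s - M.hybridProb μ A s| +
            ∑ s, |M.hybridProb μ A s - M.hybridProb μ ∅ s| := by
          rw [← Finset.sum_add_distrib]
          exact Finset.sum_le_sum fun s _ => abs_sub_le _ _ _
      _ ≤ 10 * (A.card + 1 : ℝ) ^ 2 / Fintype.card ι + 10 * (A.card : ℝ) ^ 3 / Fintype.card ι :=
          add_le_add (M.sum_abs_hybridProb_insert_sub_le μ hA) ih
      _ ≤ _ := by
          rw [hcard, ← add_div]
          gcongr
          nlinarith [sq_nonneg (A.card : ℝ)]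

theorem sum_abs_integral_rotatedProb_univ_sub_le :
    ∑ s, |(∫ O, M.rotatedProb Finset.univ s O ∂μ) - ∏ i, M.uniformProb i s| ≤
      10 * (Fintype.card κ : ℝ) ^ 3 / Fintype.card ι := by
  simpa [hybridProb, rotatedProb, pairingProd] using
    M.sum_abs_hybridProb_sub_hybridProb_empty_le μ Finset.univ

end AdaptiveMeasurement

end AdaptiveMeasurement

section FirstStep

variable {ι T : Type*} {k : ℕ}

theorem dependsOn_comp_cons {β : Type*} {f : (Fin (k + 1) → T) → β} {I : Set (Fin (k + 1))}
    (hf : DependsOn f I) (t : T) :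
    DependsOn (fun s : Fin k → T => f (Fin.cons t s)) (Fin.succ ⁻¹' I) :=
  fun _ _ h => hf fun i hi => by
    cases i using Fin.cases with
    | zero => rfl
    | succ i => exact h i hi

variable [Fintype ι] [DecidableEq ι] [Fintype T]

namespace AdaptiveMeasurement

variable (M : AdaptiveMeasurement ι (Fin (k + 1)) T)

/-- The steps of `M` after the first one, given the outcome `t` of the first one. -/
def tail (t : T) : AdaptiveMeasurement ι (Fin k) T where
  vector i s := M.vector i.succ (Fin.cons t s)
  weight i s := M.weight i.succ (Fin.cons t s)
  state i s := M.state i.succ (Fin.cons t s)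
  sum_norm_sq_vector i s := M.sum_norm_sq_vector i.succ (Fin.cons t s)
  weight_nonneg i s := M.weight_nonneg i.succ (Fin.cons t s)
  dependsOn_vector i := Fin.preimage_succ_Iic_succ i ▸ dependsOn_comp_cons (M.dependsOn_vector _) t
  dependsOn_weight i := Fin.preimage_succ_Iic_succ i ▸ dependsOn_comp_cons (M.dependsOn_weight _) t
  sum_weight_smul i s := by
    simpa only [Fin.cons_update] using M.sum_weight_smul i.succ (Fin.cons t s)
  posSemidef_state i s := M.posSemidef_state i.succ (Fin.cons t s)
  trace_state i s := M.trace_state i.succ (Fin.cons t s)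
  dependsOn_state i := Fin.preimage_succ_Iio_succ i ▸ dependsOn_comp_cons (M.dependsOn_state _) t

/-- The probability of the outcome `s 0` when the basis state `x` is measured in the first step. -/
noncomputable def initialProb (x : ι) (s : Fin (k + 1) → T) : ℝ :=
  ‖M.vector 0 s x‖ ^ 2 * M.weight 0 s

theorem initialProb_nonneg (x : ι) (s : Fin (k + 1) → T) : 0 ≤ M.initialProb x s :=
  mul_nonneg (sq_nonneg _) (M.weight_nonneg 0 s)

theorem dependsOn_initialProb (x : ι) : DependsOn (M.initialProb x) (Set.Iic 0) :=
  fun _ _ h => by rw [initialProb, initialProb, M.dependsOn_vector 0 h, M.dependsOn_weight 0 h]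

theorem sum_initialProb (x : ι) (s : Fin (k + 1) → T) :
    ∑ t, M.initialProb x (Function.update s 0 t) = 1 := by
  have hentry := congrFun₂ (M.sum_weight_smul 0 s) x x
  simp only [Matrix.sum_apply, Matrix.smul_apply, vecMulVec_apply, Pi.star_apply, Complex.star_def,
    Complex.mul_conj', one_apply_eq, smul_eq_mul] at hentry
  simp only [initialProb, mul_comm _ (M.weight _ _)]
  exact_mod_cast hentry

theorem initialProb_cons (x : ι) (t : T) (s : Fin k → T) (s₀ : Fin (k + 1) → T) :
    M.initialProb x (Fin.cons t s) = M.initialProb x (Function.update s₀ 0 t) := by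
  refine M.dependsOn_initialProb x fun i hi => ?_
  obtain rfl := Fin.le_zero_iff.mp hi
  simp

theorem sum_initialProb_mul_abs_integral_rotatedProb_sub_le (x : ι)
    (μ : Measure (unitaryGroup ι ℝ)) [μ.IsHaarMeasure] [IsProbabilityMeasure μ] :
    ∑ s, M.initialProb x s * |(∫ O, (M.tail (s 0)).rotatedProb Finset.univ (Fin.tail s) O ∂μ) -
        ∏ i, (M.tail (s 0)).uniformProb i (Fin.tail s)| ≤
      10 * (k : ℝ) ^ 3 / Fintype.card ι := by
  have : Nonempty ι := ⟨x⟩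
  rcases isEmpty_or_nonempty T with _ | _
  · rw [Fintype.sum_empty]
    positivity
  let s₀ : Fin (k + 1) → T := Classical.arbitrary _
  calc _ = ∑ t, ∑ s : Fin k → T, M.initialProb x (Fin.cons t s) *
          |(∫ O, (M.tail t).rotatedProb Finset.univ s O ∂μ) - ∏ i, (M.tail t).uniformProb i s| := by
        rw [← (Fin.consEquiv fun _ => T).sum_comp, Fintype.sum_prod_type]
        rfl
    _ = ∑ t, M.initialProb x (Function.update s₀ 0 t) * ∑ s : Fin k → T,
          |(∫ O, (M.tail t).rotatedProb Finset.univ s O ∂μ) - ∏ i, (M.tail t).uniformProb i s| := by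
        simp only [M.initialProb_cons x _ _ s₀, Finset.mul_sum]
    _ ≤ ∑ t, M.initialProb x (Function.update s₀ 0 t) *
          (10 * (k : ℝ) ^ 3 / Fintype.card ι) := by
        gcongr with t
        · exact M.initialProb_nonneg x _
        · simpa using (M.tail t).sum_abs_integral_rotatedProb_univ_sub_le μ
    _ = _ := by rw [← Finset.sum_mul, sum_initialProb, one_mul]

theorem ofReal_rotatedProb_tail (s : Fin (k + 1) → T) (O : unitaryGroup ι ℝ) :
    ((M.tail (s 0)).rotatedProb Finset.univ (Fin.tail s) O : ℂ) = ∏ i : Fin k,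
      star (M.vector i.succ s) ⬝ᵥ ((O.1.map Complex.ofReal * M.state i.succ s *
        (O.1.map Complex.ofReal)ᵀ) *ᵥ M.vector i.succ s) * (M.weight i.succ s : ℂ) := by
  rw [ofReal_rotatedProb]
  simp only [tail, Fin.cons_self_tail]

theorem prod_uniformProb_tail (s : Fin (k + 1) → T) :
    ∏ i, (M.tail (s 0)).uniformProb i (Fin.tail s) =
      ((Fintype.card ι : ℝ) ^ k)⁻¹ * ∏ i : Fin k, M.weight i.succ s := by
  simp [uniformProb, tail, Finset.prod_mul_distrib]

theorem sum_norm_initialProb_mul_sub_integral_le (x : ι)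
    (μ : Measure (unitaryGroup ι ℝ)) [μ.IsHaarMeasure] [IsProbabilityMeasure μ] :
    ∑ s, ‖((M.initialProb x s * ((Fintype.card ι : ℝ) ^ k)⁻¹ *
          ∏ i : Fin k, M.weight i.succ s : ℝ) : ℂ) -
        (M.initialProb x s : ℂ) * ∫ O : unitaryGroup ι ℝ, ∏ i : Fin k,
          (star (M.vector i.succ s) ⬝ᵥ ((O.1.map Complex.ofReal * M.state i.succ s *
            (O.1.map Complex.ofReal)ᵀ) *ᵥ M.vector i.succ s) * (M.weight i.succ s : ℂ)) ∂μ‖ ≤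
      10 * (k : ℝ) ^ 3 / Fintype.card ι := by
  refine (Finset.sum_congr rfl fun s _ => ?_).trans_le
    (M.sum_initialProb_mul_abs_integral_rotatedProb_sub_le x μ)
  simp only [← ofReal_rotatedProb_tail, integral_complex_ofReal]
  rw [← Complex.ofReal_mul, ← Complex.ofReal_sub, Complex.norm_real, Real.norm_eq_abs, mul_assoc,
    ← prod_uniformProb_tail, ← mul_sub, abs_mul, abs_of_nonneg (M.initialProb_nonneg x s),
    abs_sub_comm]

end AdaptiveMeasurement

theorem simple_measurement_tvd_orthogonal_general (x : ι)
    {y : Fin (k + 1) → (Fin (k + 1) → T) → ι → ℂ} {lam : Fin (k + 1) → (Fin (k + 1) → T) → ℝ}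
    {sig : Fin k → (Fin (k + 1) → T) → Matrix ι ι ℂ}
    (hy : ∀ i s, ∑ x, ‖y i s x‖ ^ 2 = 1) (hlam : ∀ i s, 0 ≤ lam i s)
    (hy_dep : ∀ i, DependsOn (y i) (Set.Iic i)) (hlam_dep : ∀ i, DependsOn (lam i) (Set.Iic i))
    (hcomplete : ∀ i s, ∑ t, (lam i (Function.update s i t) : ℂ) •
      vecMulVec (y i (Function.update s i t)) (star (y i (Function.update s i t))) = 1)
    (hsig : ∀ i s, (sig i s).PosSemidef ∧ (sig i s).trace = 1)
    (hsig_dep : ∀ i, DependsOn (sig i) (Set.Iic i.castSucc))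
    (μ : Measure (unitaryGroup ι ℝ)) [μ.IsHaarMeasure] [IsProbabilityMeasure μ] :
    ∑ s, ‖(((‖y 0 s x‖ ^ 2 * lam 0 s) * ((Fintype.card ι : ℝ) ^ k)⁻¹ *
          ∏ i : Fin k, lam i.succ s : ℝ) : ℂ) -
        ((‖y 0 s x‖ ^ 2 * lam 0 s : ℝ) : ℂ) * ∫ O : unitaryGroup ι ℝ, ∏ i : Fin k,
          (star (y i.succ s) ⬝ᵥ ((O.1.map Complex.ofReal * sig i s *
            (O.1.map Complex.ofReal)ᵀ) *ᵥ y i.succ s) * (lam i.succ s : ℂ)) ∂μ‖ ≤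
      10 * (k : ℝ) ^ 3 / Fintype.card ι := by
  let M : AdaptiveMeasurement ι (Fin (k + 1)) T :=
    { vector := y
      weight := lam
      state := Fin.cons (fun _ => vecMulVec (Pi.single x 1) (star (Pi.single x 1))) sig
      sum_norm_sq_vector := hy
      weight_nonneg := hlam
      dependsOn_vector := hy_dep
      dependsOn_weight := hlam_dep
      sum_weight_smul := hcomplete
      posSemidef_state := Fin.cases (fun _ => posSemidef_vecMulVec_self_star _)
        fun i s => (hsig i s).1
      trace_state := Fin.cases (fun _ => by simp [trace_vecMulVec]) fun i s => (hsig i s).2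
      dependsOn_state := Fin.cases (fun _ _ _ => rfl) fun i _ _ h =>
        hsig_dep i fun j hj => h j (Fin.le_castSucc_iff.mp hj) }
  exact M.sum_norm_initialProb_mul_sub_integral_le x μ

end FirstStep

/-- (Lemma 4.2 of the paper, orthogonal case.)  For the adaptive simple
measurement data `y, λ, σ` on `ℓ` qubits (`D = 2^ℓ`), if `k < (2^ℓ/12)^{2/7}` then the
distribution `Q_k^O(s) = Pr(s₀) ∫_{O(D)} ∏_{i=1}^k ⟨y^i|O σ^{i−1} Oᵀ|y^i⟩ λ^i dO` (Haar
measure on the real orthogonal group `O(D)`, acting on `ℂ^D` via inclusion of real matrices)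
is close in total variation to `P_k(s) = Pr(s₀) D^{−k} ∏_{i=1}^k λ^i`:
`∑_s |P_k(s) − Q_k^O(s)| ≤ C k³/2^ℓ` for a universal constant `C > 0`. -/
theorem simple_measurement_tvd_orthogonal :
    ∃ C : ℝ, 0 < C ∧
      ∀ (ℓ k Dm : ℕ), 1 ≤ ℓ → 1 ≤ k → 1 ≤ Dm →
      (k : ℝ) < ((2 : ℝ) ^ ℓ / 12) ^ ((2 : ℝ) / 7) →
      ∀ (y : Fin (k + 1) → (Fin (k + 1) → Fin Dm) → (Fin (2 ^ ℓ) → ℂ))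
        (lam : Fin (k + 1) → (Fin (k + 1) → Fin Dm) → ℝ)
        (sig : Fin k → (Fin (k + 1) → Fin Dm) → Matrix (Fin (2 ^ ℓ)) (Fin (2 ^ ℓ)) ℂ),
      (∀ i s, ∑ x, ‖y i s x‖ ^ 2 = 1) →
      (∀ i s, 0 < lam i s ∧ lam i s ≤ 1) →
      (∀ (i : Fin (k + 1)) (s s' : Fin (k + 1) → Fin Dm),
        (∀ j, j ≤ i → s j = s' j) → y i s = y i s') →
      (∀ (i : Fin (k + 1)) (s s' : Fin (k + 1) → Fin Dm),
        (∀ j, j ≤ i → s j = s' j) → lam i s = lam i s') →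
      (∀ (i : Fin (k + 1)) (s : Fin (k + 1) → Fin Dm),
        ∑ t : Fin Dm, (lam i (Function.update s i t) : ℂ) •
            Matrix.vecMulVec (y i (Function.update s i t)) (star (y i (Function.update s i t)))
          = (1 : Matrix (Fin (2 ^ ℓ)) (Fin (2 ^ ℓ)) ℂ)) →
      (∀ (i : Fin k) (s : Fin (k + 1) → Fin Dm),
        (sig i s).PosSemidef ∧ (sig i s).trace = 1) →
      (∀ (i : Fin k) (s s' : Fin (k + 1) → Fin Dm),
        (∀ j, j ≤ i.castSucc → s j = s' j) → sig i s = sig i s') →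
      ∀ (μ : Measure ↥(Matrix.unitaryGroup (Fin (2 ^ ℓ)) ℝ)),
        μ.IsHaarMeasure → IsProbabilityMeasure μ →
      ∑ s : Fin (k + 1) → Fin Dm,
        ‖((((‖y 0 s 0‖ ^ 2 * lam 0 s) * (((2 : ℝ) ^ ℓ) ^ k)⁻¹ *
              ∏ i : Fin k, lam i.succ s : ℝ)) : ℂ)
          - ((‖y 0 s 0‖ ^ 2 * lam 0 s : ℝ) : ℂ) *
              ∫ O : ↥(Matrix.unitaryGroup (Fin (2 ^ ℓ)) ℝ),
                ∏ i : Fin k,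
                  (star (y i.succ s) ⬝ᵥ
                      (((O.1.map Complex.ofReal) * sig i s * (O.1.map Complex.ofReal)ᵀ) *ᵥ
                        y i.succ s) *
                    (lam i.succ s : ℂ)) ∂μ‖
        ≤ C * (k : ℝ) ^ 3 / (2 : ℝ) ^ ℓ := by
  refine ⟨10, by norm_num, fun ℓ k Dm _ _ _ _ y lam sig hy hlam hy_dep hlam_dep hcomplete hsig
    hsig_dep μ _ _ => ?_⟩
  simpa only [Fintype.card_fin, Nat.cast_pow, Nat.cast_ofNat] using
    simple_measurement_tvd_orthogonal_general 0 hy (fun i s => (hlam i s).1.le)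
      (fun i _ _ => hy_dep i _ _) (fun i _ _ => hlam_dep i _ _) hcomplete hsig
      (fun i _ _ => hsig_dep i _ _) μ
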